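/- arXiv:2209.00038 — 2 statements merged into one kernel-verified Lean document; each statement's English description precedes it below -/
import Mathlib

section
/- With all heat operators taken with index m = 5/2, the following two identities hold at every point (τ,z) ∈ ℍ × ℂ with ϑ(τ,z) ≠ 0: H^{(5/2)}_{0}(φ_{0,5/2})(τ,z) = −(11/5)·E₄(τ)·φ_{−2,1}(τ,z)·φ_{0,3/2}(τ,z), and H^{(5/2)}_{−2}(φ_{−2,1}·φ_{0,3/2})(τ,z) = −(1/5)·φ_{0,1}(τ,z)·φ_{0,3/2}(τ,z). -/
/-!
Write `Θ k` for the `k`-th `z`-derivative of `ϑ`, given by its termwise differentiated series. The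
series shows the heat equation `∂_τ Θ k = Θ (k+2) / (4πi)`, so every derivative that occurs in
`H^{(5/2)}` is a `z`-derivative of `ϑ`, a derivative of `η`, or a derivative of `E₂`. With
`L_j = (∂/∂z)^j log ϑ`, both identities become polynomial identities in `E₂, L₁, L₂, L₃, L₄` once
the following facts are known.

* `ϑ(z) = C · sin(πz) · exp(-S₀(z))` on the strip `|Im z| < Im τ`, where
  `S₀(z) = ∑_{m ≥ 1} q^m (ζ^m + ζ^{-m}) / (m (1 - q^m))` (`exists_factor`). This logarithmic form of
  the Jacobi triple product ties `ϑ` to `E₂` and `E₄`, whose Lambert series give the second and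
  fourth derivatives of `S₀` at `0`.
* The differential equation of the Weierstrass function,
  `(E₂ + (3/π²) L₂)² + (3/(2π⁴)) L₄ = E₄` (`lam_ode`, `lg_ode`); it says `℘'' = 6℘² - g₂/2`, as
  `L₂ = -℘ - (π²/3) E₂`.
* The duplication formula `ϑ(2z) = κ L₃(z) ϑ(z)⁴` with `κ` depending only on `τ`
  (`exists_duplication`, `Th_dup`).
* Ramanujan's `E₂' = (πi/6)(E₂² - E₄)` (`hasDerivAt_Eis2`), read off from the first, third and fifth
  Taylor coefficients of `ϑ` at `0` and the heat equation, and `η' = (πi/12) E₂ η`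
  (`hasDerivAt_etaD`).

The first three are elliptic-function arguments. All of them use `strip_const`: a function on
`|Im z| < Im τ` that has periods `1` and `τ` and removable singularities at the integers is constant,
by the maximum principle. Identities between entire functions extend from the strip to the plane by
the identity theorem (`eq_zero_of_strip`).
-/


open Complex Real

noncomputable section

/-- The Jacobi theta series `ϑ(τ,z) = q^{1/8} ζ^{1/2} ∑_{n∈ℤ} (−1)^n q^{n(n+1)/2} ζ^n`
with `q = e^{2πiτ}`, `ζ = e^{2πiz}`. -/
def thetaJ (τ z : ℂ) : ℂ :=
  Complex.exp (π * I * τ / 4) * Complex.exp (π * I * z) *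
    ∑' n : ℤ, (-1 : ℂ) ^ n * Complex.exp (π * I * τ * n * (n + 1)) *
      Complex.exp (2 * π * I * z * n)

/-- The Dedekind eta function `η(τ) = q^{1/24} ∏_{n≥1} (1 − q^n)`. -/
def etaD (τ : ℂ) : ℂ :=
  Complex.exp (π * I * τ / 12) * ∏' n : ℕ, (1 - Complex.exp (2 * π * I * τ * (n + 1)))

/-- The divisor power sum `σ_k(n) = ∑_{d ∣ n} d^k`. -/
def sigmaD (k n : ℕ) : ℕ := ∑ d ∈ n.divisors, d ^ k

/-- The quasi-modular Eisenstein series `E₂`. -/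
def Eis2 (τ : ℂ) : ℂ :=
  1 - 24 * ∑' n : ℕ, (sigmaD 1 (n + 1) : ℂ) * Complex.exp (2 * π * I * τ * (n + 1))

/-- The Eisenstein series `E₄`. -/
def Eis4 (τ : ℂ) : ℂ :=
  1 + 240 * ∑' n : ℕ, (sigmaD 3 (n + 1) : ℂ) * Complex.exp (2 * π * I * τ * (n + 1))

/-- The Eisenstein series `E₆`. -/
def Eis6 (τ : ℂ) : ℂ :=
  1 - 504 * ∑' n : ℕ, (sigmaD 5 (n + 1) : ℂ) * Complex.exp (2 * π * I * τ * (n + 1))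

/-- The heat operator `H^{(m)}φ = (12/(2πi)) ∂φ/∂τ + (3/(4π²m)) ∂²φ/∂z²` of index `m`. -/
def heatOp (m : ℚ) (φ : ℂ → ℂ → ℂ) (τ z : ℂ) : ℂ :=
  12 / (2 * π * I) * deriv (fun t => φ t z) τ
    + 3 / (4 * π ^ 2 * (m : ℂ)) * deriv (deriv (φ τ)) z

/-- The modular heat operator `H^{(m)}_k φ = H^{(m)}φ − ((2k−1)/2)·E₂·φ`. -/
def heatMod (m k : ℚ) (φ : ℂ → ℂ → ℂ) (τ z : ℂ) : ℂ :=
  heatOp m φ τ z - (2 * (k : ℂ) - 1) / 2 * Eis2 τ * φ τ z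

/-- The weak Jacobi form `φ_{−2,1} = ϑ²/η⁶` of weight −2 and index 1. -/
def phim21 (τ z : ℂ) : ℂ := thetaJ τ z ^ 2 / etaD τ ^ 6

/-- The weak Jacobi form `φ_{0,1}` of weight 0 and index 1:
`φ_{0,1} = (3/π²)·(ϑ·∂²ϑ/∂z² − (∂ϑ/∂z)²)/η⁶ + E₂·ϑ²/η⁶`. -/
def phi01 (τ z : ℂ) : ℂ :=
  3 / (π : ℂ) ^ 2 *
      (thetaJ τ z * deriv (deriv (thetaJ τ)) z - (deriv (thetaJ τ) z) ^ 2) / etaD τ ^ 6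
    + Eis2 τ * thetaJ τ z ^ 2 / etaD τ ^ 6

/-- The weak Jacobi form `φ_{0,3/2}(τ,z) = ϑ(τ,2z)/ϑ(τ,z)` of weight 0 and index 3/2. -/
def phi032 (τ z : ℂ) : ℂ := thetaJ τ (2 * z) / thetaJ τ z

/-- The weak Jacobi form `φ_{0,5/2} = φ_{0,3/2}·φ_{0,1}` of weight 0 and index 5/2. -/
def phi052 (τ z : ℂ) : ℂ := phi032 τ z * phi01 τ z

open Filter Topology

/-! ### The theta series and the heat equation -/

/-- The `n`-th term of the `k`-times `z`-differentiated theta series, with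
`q^{1/8} ζ^{1/2}` absorbed: the exponents are the half-integers `n + 1/2`. -/
def thTerm (k : ℕ) (τ z : ℂ) (n : ℤ) : ℂ :=
  (-1 : ℂ) ^ n * (2 * π * I * (n + 1 / 2)) ^ k *
    cexp (π * I * τ * (n + 1 / 2) ^ 2 + 2 * π * I * (n + 1 / 2) * z)

/-- The `k`-th `z`-derivative of `ϑ(τ, ·)`, defined by its series. -/
def Th (k : ℕ) (τ z : ℂ) : ℂ := ∑' n : ℤ, thTerm k τ z n

lemma thetaJ_eq_Th (τ z : ℂ) : thetaJ τ z = Th 0 τ z := by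
  unfold thetaJ Th
  rw [← tsum_mul_left]
  congr 1; ext n
  unfold thTerm
  rw [pow_zero, mul_one, mul_assoc ((-1:ℂ)^n), mul_left_comm, ← Complex.exp_add, ← Complex.exp_add,
    ← Complex.exp_add]
  congr 2; ring

/-- A summable majorant of `‖thTerm k τ z n‖`, uniform for `Im τ ≥ T` and `|Im z| ≤ S`; it is
shaped so that summability reduces to the bound Mathlib uses for `jacobiTheta₂`. -/
def thBound (S T : ℝ) (k : ℕ) (n : ℤ) : ℝ :=
  (2 * π) ^ k * rexp (π * S) * ((|n| + 1 : ℤ) ^ k * rexp (-π * (T * n ^ 2 - 2 * (S + T) * |n|)))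

lemma summable_thBound (S : ℝ) {T : ℝ} (hT : 0 < T) (k : ℕ) : Summable (thBound S T k) := by
  unfold thBound
  apply Summable.mul_left
  have h1 := summable_pow_mul_jacobiTheta₂_term_bound (S + T) hT k
  have h0 := summable_pow_mul_jacobiTheta₂_term_bound (S + T) hT 0
  refine Summable.of_nonneg_of_le (fun n => by positivity) (fun n => ?_)
    ((h1.add h0).mul_left (2 ^ k))
  rw [← add_mul, ← mul_assoc]
  gcongr
  push_cast
  have := add_pow_le (a := |(n:ℝ)|) (b := 1) (by positivity) (by positivity) k
  have h2 : (2:ℝ) ^ (k - 1) ≤ 2 ^ k := pow_le_pow_right₀ (by norm_num) (by omega)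
  calc _ ≤ _ := this
    _ ≤ 2 ^ k * (|(n:ℝ)| ^ k + 1 ^ k) := by gcongr
    _ = _ := by simp

lemma norm_thTerm_le {S T : ℝ} (k : ℕ) (hT : 0 < T) (hS : 0 < S) {τ z : ℂ} (hτ : T ≤ τ.im)
    (hz : |z.im| ≤ S) (n : ℤ) : ‖thTerm k τ z n‖ ≤ thBound S T k n := by
  have hre : ((π * I * τ * (n + 1 / 2) ^ 2 + 2 * π * I * (n + 1 / 2) * z : ℂ)).re
      = -π * (τ.im * (n + 1/2) ^ 2 + 2 * (n + 1/2) * z.im) := by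
    have e1 : (π * I * τ * (n + 1 / 2) ^ 2 + 2 * π * I * (n + 1 / 2) * z : ℂ)
      = ((π * (n+1/2)^2 : ℝ) : ℂ) * (I * τ) + ((2 * π * (n + 1/2) : ℝ) : ℂ) * (I * z) := by
      push_cast; ring
    rw [e1, Complex.add_re, Complex.re_ofReal_mul, Complex.re_ofReal_mul]
    simp; ring
  unfold thTerm thBound
  rw [norm_mul, norm_mul, norm_pow, norm_zpow, norm_neg, norm_one, one_zpow, one_mul,
    Complex.norm_exp, hre]
  have hn : ‖(2 * π * I * (n + 1 / 2) : ℂ)‖ ≤ 2 * π * (|n| + 1 : ℤ) := by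
    have : (2 * π * I * (n + 1 / 2) : ℂ) = ((2 * π * (n + 1/2) : ℝ) : ℂ) * I := by push_cast; ring
    rw [this, norm_mul, Complex.norm_I, mul_one, Complex.norm_real, norm_mul,
      Real.norm_of_nonneg (by positivity)]
    gcongr
    push_cast
    calc ‖(n:ℝ) + 1/2‖ ≤ ‖(n:ℝ)‖ + ‖(1/2:ℝ)‖ := norm_add_le _ _
      _ ≤ _ := by rw [Real.norm_eq_abs]; norm_num
  have he : -π * (τ.im * ((n:ℝ) + 1/2) ^ 2 + 2 * (n + 1/2) * z.im) ≤
      π * S + -π * (T * n ^ 2 - 2 * (S + T) * |n|) := by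
    have hpi := Real.pi_pos
    have : T * (n:ℝ) ^ 2 - 2 * (S + T) * |(n:ℝ)| - S ≤ τ.im * ((n:ℝ) + 1/2) ^ 2 + 2 * (n + 1/2) * z.im := by
      have a1 : T * ((n:ℝ) + 1/2)^2 ≤ τ.im * ((n:ℝ) + 1/2)^2 := by gcongr
      have a2 : -(2 * |(n:ℝ) + 1/2| * S) ≤ 2 * ((n:ℝ) + 1/2) * z.im := by
        have : |2 * ((n:ℝ) + 1/2) * z.im| ≤ 2 * |(n:ℝ) + 1/2| * S := by
          rw [abs_mul, abs_mul, abs_two]; gcongr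
        linarith [neg_abs_le (2 * ((n:ℝ) + 1/2) * z.im)]
      have a3 : |(n:ℝ) + 1/2| ≤ |(n:ℝ)| + 1/2 := by
        calc _ ≤ |(n:ℝ)| + |(1/2:ℝ)| := abs_add_le _ _
          _ = _ := by norm_num
      have a4 : T * ((n:ℝ) + 1/2)^2 ≥ T * n^2 - T * |(n:ℝ)| := by
        nlinarith [neg_abs_le (n:ℝ)]
      have a5 := abs_nonneg (n:ℝ)
      nlinarith
    push_cast
    nlinarith
  calc _ ≤ (2 * π * (|n| + 1 : ℤ)) ^ k * rexp (π * S + -π * (T * n ^ 2 - 2 * (S + T) * |n|)) := by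
        gcongr
    _ = _ := by rw [Real.exp_add]; ring

lemma summable_thTerm (k : ℕ) {τ : ℂ} (hτ : 0 < τ.im) (z : ℂ) : Summable (thTerm k τ z) :=
  Summable.of_norm_bounded (summable_thBound (|z.im| + 1) hτ k) fun n =>
    norm_thTerm_le k hτ (by positivity) le_rfl (by linarith) n

lemma hasDerivAt_Th_z (k : ℕ) {τ : ℂ} (hτ : 0 < τ.im) (z : ℂ) :
    HasDerivAt (Th k τ) (Th (k + 1) τ z) z := by
  have hopen : IsOpen {w : ℂ | |w.im| < |z.im| + 1} :=
    isOpen_lt (by fun_prop) continuous_const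
  have hconv : Convex ℝ {w : ℂ | |w.im| < |z.im| + 1} := by
    have : {w : ℂ | |w.im| < |z.im| + 1} = Complex.imLm ⁻¹' (Set.Ioo (-(|z.im| + 1)) (|z.im| + 1)) := by
      ext w; simp [abs_lt]
    rw [this]; exact (convex_Ioo _ _).linear_preimage _
  refine hasDerivAt_tsum_of_isPreconnected (summable_thBound (|z.im| + 1) hτ (k + 1)) hopen
    hconv.isPreconnected (g := fun n w => thTerm k τ w n) (g' := fun n w => thTerm (k+1) τ w n)
    (fun n w _ => ?_) (fun n w hw => norm_thTerm_le _ hτ (by positivity) le_rfl (le_of_lt hw) n)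
    (y₀ := z) (by simp) (summable_thTerm k hτ z) (by simp)
  unfold thTerm
  have h1 : HasDerivAt (fun w : ℂ => (π * I * τ * (n + 1 / 2) ^ 2 + 2 * π * I * (n + 1 / 2) * w : ℂ))
    (2 * π * I * (n + 1 / 2) * 1) w := ((hasDerivAt_id w).const_mul _).const_add _
  refine ((h1.cexp).const_mul ((-1 : ℂ) ^ n * (2 * π * I * (n + 1 / 2)) ^ k)).congr_deriv ?_
  ring

/-- The heat equation `4πi ∂_τ ϑ = ∂_z² ϑ`, and its `z`-derivatives. -/
lemma hasDerivAt_Th_tau (k : ℕ) {τ : ℂ} (hτ : 0 < τ.im) (z : ℂ) :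
    HasDerivAt (fun t => Th k t z) (Th (k + 2) τ z / (4 * π * I)) τ := by
  have hT : 0 < τ.im / 2 := by positivity
  have hopen : IsOpen {w : ℂ | τ.im / 2 < w.im} := isOpen_lt continuous_const (by fun_prop)
  have hconv : Convex ℝ {w : ℂ | τ.im / 2 < w.im} := convex_halfSpace_im_gt _
  unfold Th
  rw [← tsum_div_const]
  refine hasDerivAt_tsum_of_isPreconnected
    (u := fun n => thBound (|z.im| + 1) (τ.im / 2) (k + 2) n / ‖(4 * π * I : ℂ)‖)
    ((summable_thBound _ hT (k + 2)).div_const _) hopen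
    hconv.isPreconnected (g := fun n w => thTerm k w z n)
    (g' := fun n w => thTerm (k+2) w z n / (4 * π * I))
    (fun n w _ => ?_) (fun n w hw => ?_)
    (y₀ := τ) (by simp; linarith) (summable_thTerm k hτ z) (by simp; linarith)
  · unfold thTerm
    have h1 : HasDerivAt (fun t : ℂ => (π * I * t * (n + 1 / 2) ^ 2 + 2 * π * I * (n + 1 / 2) * z : ℂ))
      (π * I * 1 * (n + 1 / 2) ^ 2) w :=
      (((hasDerivAt_id w).const_mul _).mul_const _).add_const _
    refine ((h1.cexp).const_mul ((-1 : ℂ) ^ n * (2 * π * I * (n + 1 / 2)) ^ k)).congr_deriv ?_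
    have := Complex.I_ne_zero
    have : (π : ℂ) ≠ 0 := by exact_mod_cast Real.pi_ne_zero
    field_simp
    ring
  · rw [norm_div]
    gcongr
    exact norm_thTerm_le _ hT (by positivity) (le_of_lt hw) (by linarith) n

lemma Th_neg (k : ℕ) (τ z : ℂ) : Th k τ (-z) = -(-1) ^ k * Th k τ z := by
  unfold Th
  rw [← tsum_mul_left, ← (Equiv.subLeft (-1 : ℤ)).tsum_eq (thTerm k τ (-z))]
  congr 1; ext n
  unfold thTerm
  simp only [Equiv.subLeft_apply]
  have h1 : (-1 : ℂ) ^ (-1 - n : ℤ) = -(-1) ^ n := by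
    rw [zpow_sub₀ (by norm_num)]
    rcases Int.even_or_odd n with h | h
    · simp [h.neg_one_zpow]
    · simp [h.neg_one_zpow]
  rw [h1]
  push_cast
  rw [show (2 * π * I * (-1 - n + 1 / 2) : ℂ) = (-1) * (2 * π * I * (n + 1 / 2)) by ring, mul_pow]
  rw [show (π * I * τ * (-1 - n + 1 / 2) ^ 2 + -1 * (2 * π * I * (n + 1 / 2)) * -z : ℂ)
    = π * I * τ * (n + 1 / 2) ^ 2 + 2 * π * I * (n + 1 / 2) * z by ring]
  ring

lemma Th_zero_even {k : ℕ} (hk : Even k) (τ : ℂ) : Th k τ 0 = 0 := by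
  have := Th_neg k τ 0
  rw [neg_zero, hk.neg_one_pow] at this
  linear_combination this / 2

lemma Th_add_one (τ z : ℂ) : Th 0 τ (z + 1) = -Th 0 τ z := by
  unfold Th
  rw [← tsum_neg]
  congr 1; ext n
  unfold thTerm
  rw [show (π * I * τ * (n + 1 / 2) ^ 2 + 2 * π * I * (n + 1 / 2) * (z + 1) : ℂ)
    = (π * I * τ * (n + 1 / 2) ^ 2 + 2 * π * I * (n + 1 / 2) * z) + (n * (2 * π * I) + π * I) by ring,
    Complex.exp_add _ (n * (2 * π * I) + π * I), Complex.exp_add (n * (2 * π * I)),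
    Complex.exp_int_mul_two_pi_mul_I, Complex.exp_pi_mul_I]
  ring

lemma Th_add_tau (τ z : ℂ) :
    Th 0 τ (z + τ) = -cexp (-(π * I * τ) - 2 * π * I * z) * Th 0 τ z := by
  unfold Th
  rw [← tsum_mul_left, ← (Equiv.addRight (1 : ℤ)).tsum_eq (fun n => _ * thTerm 0 τ z n)]
  congr 1; ext n
  unfold thTerm
  simp only [Equiv.coe_addRight]
  rw [zpow_add_one₀ (by norm_num)]
  push_cast
  rw [show (π * I * τ * (n + 1 / 2) ^ 2 + 2 * π * I * (n + 1 / 2) * (z + τ) : ℂ)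
    = (-(π * I * τ) - 2 * π * I * z) +
      (π * I * τ * (n + 1 + 1 / 2) ^ 2 + 2 * π * I * (n + 1 + 1 / 2) * z) by ring, Complex.exp_add]
  ring

/-! ### A Liouville theorem on the strip -/

/-- A function on the strip `|Im z| < Im τ`, holomorphic off the integers, with periods `1` and `τ`
and agreeing near `0` with a function `g` differentiable at `0`, is the constant `g 0`. Every value
is taken on a compact rectangle inside the strip, so `|f|` attains its maximum there. -/
lemma strip_const {τ : ℂ} (hτ : 0 < τ.im) {f g : ℂ → ℂ}
    (hd : ∀ z : ℂ, |z.im| < τ.im → (∀ n : ℤ, z ≠ n) → DifferentiableAt ℂ f z)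
    (h1 : ∀ z : ℂ, |z.im| < τ.im → (∀ n : ℤ, z ≠ n) → f (z + 1) = f z)
    (h2 : ∀ z : ℂ, -τ.im < z.im → z.im < 0 → f (z + τ) = f z)
    (hg : DifferentiableAt ℂ g 0) (hfg : ∀ᶠ z in 𝓝[≠] 0, f z = g z)
    {z : ℂ} (hz : |z.im| < τ.im) (hzn : ∀ n : ℤ, z ≠ n) : f z = g 0 := by
  classical
  set F : ℂ → ℂ := fun z => if ∃ n : ℤ, z = n then g 0 else f z with hF
  have F_of : ∀ w : ℂ, (∀ n : ℤ, w ≠ n) → F w = f w := by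
    intro w hw; simp only [hF]; rw [if_neg]; push Not; exact hw
  have F_int : ∀ n : ℤ, F n = g 0 := by
    intro n; simp only [hF]; rw [if_pos ⟨n, rfl⟩]
  have F_im : ∀ w : ℂ, w.im ≠ 0 → F w = f w := by
    intro w hw; apply F_of; rintro n rfl; simp at hw
  have F1 : ∀ w : ℂ, |w.im| < τ.im → F (w + 1) = F w := by
    intro w hw
    by_cases h : ∃ n : ℤ, w = n
    · obtain ⟨n, rfl⟩ := h
      have := F_int (n + 1)
      push_cast at this
      rw [F_int, this]
    · push Not at h
      rw [F_of w h, F_of, h1 w hw h]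
      intro n hn
      apply h (n - 1); push_cast; rw [← hn]; ring
  have Fn : ∀ (n : ℤ) (w : ℂ), |w.im| < τ.im → F (w + n) = F w := by
    intro n
    induction n using Int.induction_on with
    | zero => simp
    | succ k ih =>
      intro w hw
      rw [← ih w hw, ← F1 (w + (k : ℤ)) (by simpa using hw)]; push_cast; ring_nf
    | pred k ih =>
      intro w hw
      rw [← ih w hw, ← F1 (w + ((-k - 1 : ℤ) : ℂ)) (by simpa using hw)]; push_cast; ring_nf
  have Fτ : ∀ w : ℂ, -τ.im < w.im → w.im < 0 → F (w + τ) = F w := by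
    intro w hw hw'
    rw [F_im w hw'.ne, F_im (w + τ) (by simp; linarith), h2 w hw hw']
  have hcl : IsClosed (Set.range ((↑) : ℤ → ℂ)) := Complex.isClosed_range_intCast
  have hF0 : DifferentiableAt ℂ F 0 := by
    refine hg.congr_of_eventuallyEq ?_
    rw [eventually_nhdsWithin_iff] at hfg
    have hU : ∀ᶠ w in 𝓝 (0:ℂ), ∀ n : ℤ, w = (n : ℂ) → w = 0 := by
      have : ∀ᶠ w in 𝓝 (0:ℂ), ‖w‖ < 1 := by
        have := Metric.ball_mem_nhds (0:ℂ) one_pos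
        filter_upwards [this] with w hw; simpa using hw
      filter_upwards [this] with w hw n hn
      subst hn
      rw [Complex.norm_intCast] at hw
      have : |n| < 1 := by exact_mod_cast hw
      have : n = 0 := by simpa using this
      simp [this]
    filter_upwards [hfg, hU] with w hw hu
    by_cases h0 : w = 0
    · subst h0; simpa using F_int 0
    · rw [F_of w (fun n hn => h0 (hu n hn))]; exact hw h0
  have hopen : IsOpen {w : ℂ | |w.im| < τ.im} := isOpen_lt (by fun_prop) continuous_const
  have hFd : ∀ w : ℂ, |w.im| < τ.im → DifferentiableAt ℂ F w := by
    intro w hw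
    by_cases h : ∃ n : ℤ, w = n
    · obtain ⟨n, rfl⟩ := h
      have hh : DifferentiableAt ℂ (fun v : ℂ => F (v - n)) n :=
        DifferentiableAt.comp (g := F) (n:ℂ) (by simpa using hF0) (by fun_prop)
      refine hh.congr_of_eventuallyEq ?_
      filter_upwards [hopen.mem_nhds hw] with v hv
      rw [← Fn n (v - n) (by simpa using hv)]; ring_nf
    · push Not at h
      refine (hd w hw h).congr_of_eventuallyEq ?_
      filter_upwards [hcl.isOpen_compl.mem_nhds (x := w) (by rintro ⟨n, hn⟩; exact h n hn.symm)]
        with v hv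
      exact F_of v (fun n hn => hv ⟨n, hn.symm⟩)
  have hconv : Convex ℝ {w : ℂ | |w.im| < τ.im} := by
    have : {w : ℂ | |w.im| < τ.im} = Complex.imLm ⁻¹' (Set.Ioo (-τ.im) τ.im) := by
      ext w; simp [abs_lt]
    rw [this]; exact (convex_Ioo _ _).linear_preimage _
  -- the maximum of `|F|` over a compact rectangle is its maximum over the whole strip
  set K : Set ℂ := Set.Icc 0 1 ×ℂ Set.Icc (-(τ.im / 2)) (τ.im / 2) with hK
  have hKc : IsCompact K := isCompact_Icc.reProdIm isCompact_Icc
  have hKs : ∀ w ∈ K, |w.im| < τ.im := by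
    rintro w ⟨_, hw⟩
    simp only [Set.mem_preimage, Set.mem_Icc] at hw
    rw [abs_lt]; constructor <;> linarith [hw.1, hw.2]
  have hKne : K.Nonempty := ⟨0, by simp [hK, Complex.mem_reProdIm]; positivity⟩
  obtain ⟨x, hxK, hx⟩ := hKc.exists_isMaxOn hKne (f := fun w => ‖F w‖)
    (fun w hw => ((hFd w (hKs w hw)).continuousAt.norm).continuousWithinAt)
  have hmid : ∀ w : ℂ, |w.im| ≤ τ.im / 2 → ‖F w‖ ≤ ‖F x‖ := by
    intro w hw
    rw [← Fn (-⌊w.re⌋) w (by linarith)]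
    apply hx
    rw [abs_le] at hw
    simp only [hK, Complex.mem_reProdIm, Set.mem_Icc]
    have := Int.floor_le w.re
    have := Int.lt_floor_add_one w.re
    simp
    refine ⟨⟨by linarith, by linarith⟩, by linarith, by linarith⟩
  have hmax : IsMaxOn (fun w => ‖F w‖) {w : ℂ | |w.im| < τ.im} x := by
    intro w hw
    have hw' := abs_lt.1 (show |w.im| < τ.im from hw)
    show ‖F w‖ ≤ ‖F x‖
    by_cases h : |w.im| ≤ τ.im / 2
    · exact hmid w h
    · rcases le_or_gt 0 w.im with h0 | h0
      · rw [abs_of_nonneg h0] at h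
        have := Fτ (w - τ) (by simp; linarith) (by simp; linarith)
        rw [sub_add_cancel] at this
        rw [this]
        apply hmid
        rw [abs_le]; simp; constructor <;> linarith
      · rw [abs_of_neg h0] at h
        rw [← Fτ w (by linarith) h0]
        apply hmid
        rw [abs_le]; simp; constructor <;> linarith
  have hconst := Complex.eqOn_of_isPreconnected_of_isMaxOn_norm hconv.isPreconnected hopen
    (fun w hw => (hFd w hw).differentiableWithinAt) (hKs x hxK) hmax
  have e1 := hconst (show z ∈ _ from hz)
  have e0 := hconst (show (0:ℂ) ∈ _ by simpa using hτ)
  rw [← F_of z hzn]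
  have := F_int 0
  simp at e0 e1 this
  rw [e1, ← e0, this]

/-! ### The logarithm of the triple product, and `η` -/

/-- The `m`-th term of the `k`-th `z`-derivative of
`S₀(z) = ∑_{m ≥ 1} q^m (ζ^m + ζ^{-m}) / (m (1 - q^m))`. The term `m = 0` vanishes because division
by `0` gives `0`. -/
def sTerm (k : ℕ) (τ z : ℂ) (m : ℕ) : ℂ :=
  cexp (2 * π * I * τ) ^ m / (m * (1 - cexp (2 * π * I * τ) ^ m)) * (2 * π * I * m) ^ k *
    (cexp (2 * π * I * m * z) + (-1) ^ k * cexp (-(2 * π * I * m * z)))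

/-- The `k`-th `z`-derivative of `S₀(z) = -log ∏_{n ≥ 1} (1 - q^n ζ)(1 - q^n ζ⁻¹)`. The series
converges for `|Im z| < Im τ`. -/
def Sk (k : ℕ) (τ z : ℂ) : ℂ := ∑' m : ℕ, sTerm k τ z m

lemma norm_q (τ : ℂ) : ‖cexp (2 * π * I * τ)‖ = rexp (-(2 * π * τ.im)) := by
  rw [Complex.norm_exp]; congr 1; simp

lemma norm_q_lt_one {τ : ℂ} (hτ : 0 < τ.im) : ‖cexp (2 * π * I * τ)‖ < 1 := by
  rw [norm_q, Real.exp_lt_one_iff]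
  have := Real.pi_pos
  have : 0 < 2 * π * τ.im := by positivity
  linarith

lemma one_sub_q_pow_ne_zero {τ : ℂ} (hτ : 0 < τ.im) {m : ℕ} (hm : m ≠ 0) :
    1 - cexp (2 * π * I * τ) ^ m ≠ 0 := by
  intro h
  have h1 : ‖cexp (2 * π * I * τ) ^ m‖ < 1 := by
    rw [norm_pow]; exact pow_lt_one₀ (norm_nonneg _) (norm_q_lt_one hτ) hm
  rw [← sub_eq_zero.1 h] at h1
  simp at h1

/-- A summable majorant of `‖sTerm k τ z m‖`, uniform for `|Im z| ≤ S < Im τ`. -/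
def sBound (S : ℝ) (τ : ℂ) (k m : ℕ) : ℝ :=
  (1 - rexp (-(2 * π * τ.im)))⁻¹ * (2 * π) ^ k * 2 * ((m : ℝ) ^ k * rexp (-(2 * π * (τ.im - S))) ^ m)

lemma summable_sBound {S : ℝ} {τ : ℂ} (hS : S < τ.im) (k : ℕ) : Summable (sBound S τ k) := by
  unfold sBound
  apply Summable.mul_left
  have h := summable_norm_pow_mul_geometric_of_norm_lt_one (R := ℝ) k
    (r := rexp (-(2 * π * (τ.im - S)))) (by
      rw [Real.norm_of_nonneg (Real.exp_nonneg _), Real.exp_lt_one_iff]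
      have := mul_pos Real.pi_pos (sub_pos.2 hS)
      linarith)
  exact h.of_norm

lemma norm_sTerm_le {S : ℝ} {τ z : ℂ} (k : ℕ) (hτ : 0 < τ.im) (hz : |z.im| ≤ S) (m : ℕ) :
    ‖sTerm k τ z m‖ ≤ sBound S τ k m := by
  have hr : rexp (-(2 * π * τ.im)) < 1 := by rw [← norm_q]; exact norm_q_lt_one hτ
  have hpi := Real.pi_pos
  rcases Nat.eq_zero_or_pos m with rfl | hm
  · unfold sTerm sBound
    simp only [Nat.cast_zero, zero_mul, div_zero, norm_zero]
    have : 0 ≤ (1 - rexp (-(2 * π * τ.im)))⁻¹ := inv_nonneg.2 (by linarith)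
    positivity
  have hm1 : (1:ℝ) ≤ m := by exact_mod_cast hm
  have hexp : ∀ s : ℝ, |s| ≤ 1 → ‖cexp (s * (2 * π * I * m * z))‖ ≤ rexp (2 * π * S) ^ m := by
    intro s hs
    rw [Complex.norm_exp, ← Real.exp_nat_mul, Real.exp_le_exp, Complex.re_ofReal_mul]
    have e : (2 * π * I * m * z : ℂ).re = -(2 * π * m * z.im) := by
      rw [show (2 * π * I * m * z : ℂ) = ((2 * π * m : ℝ) : ℂ) * (I * z) by push_cast; ring,
        Complex.re_ofReal_mul]; simp
    rw [e]
    calc s * -(2 * π * m * z.im) ≤ |s * -(2 * π * m * z.im)| := le_abs_self _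
      _ = |s| * (2 * π * m * |z.im|) := by
        rw [abs_mul, abs_neg, abs_mul, abs_of_nonneg (show 0 ≤ 2 * π * (m:ℝ) by positivity)]
      _ ≤ 1 * (2 * π * m * S) := by gcongr
      _ = _ := by ring
  have hp := hexp 1 (by simp)
  have hn := hexp (-1) (by simp)
  simp only [Complex.ofReal_one, one_mul, Complex.ofReal_neg, neg_mul] at hp hn
  have hsum : ‖cexp (2 * π * I * m * z) + (-1) ^ k * cexp (-(2 * π * I * m * z))‖
      ≤ 2 * rexp (2 * π * S) ^ m := by
    refine (norm_add_le _ _).trans ?_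
    rw [norm_mul, norm_pow, norm_neg, norm_one, one_pow, one_mul]
    have : (-(2 * π * I * m * z) : ℂ) = -(2 * ↑π * I * ↑m * z) := by ring
    linarith
  have hden : 1 - rexp (-(2 * π * τ.im)) ≤ ‖(m * (1 - cexp (2 * π * I * τ) ^ m) : ℂ)‖ := by
    rw [norm_mul, Complex.norm_natCast]
    have h1 : 1 - rexp (-(2 * π * τ.im)) ≤ ‖(1 - cexp (2 * π * I * τ) ^ m : ℂ)‖ := by
      have := norm_sub_norm_le (1:ℂ) (cexp (2 * π * I * τ) ^ m)
      rw [norm_one, norm_pow, norm_q] at this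
      have h2 : rexp (-(2 * π * τ.im)) ^ m ≤ rexp (-(2 * π * τ.im)) :=
        pow_le_of_le_one (Real.exp_nonneg _) hr.le hm.ne'
      linarith
    nlinarith [norm_nonneg (1 - cexp (2 * π * I * τ) ^ m : ℂ)]
  unfold sTerm sBound
  rw [norm_mul, norm_mul, norm_div, norm_pow, norm_q, norm_pow]
  have hb : ‖(2 * π * I * m : ℂ)‖ = 2 * π * m := by
    simp [abs_of_pos hpi]
  rw [hb]
  have hpos : 0 < 1 - rexp (-(2 * π * τ.im)) := by linarith
  calc _ ≤ rexp (-(2 * π * τ.im)) ^ m / (1 - rexp (-(2 * π * τ.im))) * (2 * π * m) ^ k *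
        (2 * rexp (2 * π * S) ^ m) := by gcongr
    _ = _ := by
      have : rexp (-(2 * π * (τ.im - S))) = rexp (-(2 * π * τ.im)) * rexp (2 * π * S) := by
        rw [← Real.exp_add]; congr 1; ring
      rw [this, mul_pow, mul_pow _ _ m]; ring

lemma summable_sTerm (k : ℕ) {τ z : ℂ} (hz : |z.im| < τ.im) : Summable (sTerm k τ z) :=
  Summable.of_norm_bounded (summable_sBound hz k) fun m =>
    norm_sTerm_le k ((abs_nonneg _).trans_lt hz) le_rfl m

lemma isOpen_strip (h : ℝ) : IsOpen {w : ℂ | |w.im| < h} :=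
  isOpen_lt (by fun_prop) continuous_const

lemma convex_strip (h : ℝ) : Convex ℝ {w : ℂ | |w.im| < h} := by
  have : {w : ℂ | |w.im| < h} = Complex.imLm ⁻¹' (Set.Ioo (-h) h) := by
    ext w; simp [abs_lt]
  rw [this]; exact (convex_Ioo _ _).linear_preimage _

lemma hasDerivAt_Sk (k : ℕ) {τ z : ℂ} (hz : |z.im| < τ.im) :
    HasDerivAt (Sk k τ) (Sk (k + 1) τ z) z := by
  obtain ⟨S, hS1, hS2⟩ := exists_between hz
  have hτ : 0 < τ.im := (abs_nonneg _).trans_lt hz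
  refine hasDerivAt_tsum_of_isPreconnected (summable_sBound hS2 (k + 1)) (isOpen_strip S)
    (convex_strip S).isPreconnected (g := fun n w => sTerm k τ w n)
    (g' := fun n w => sTerm (k+1) τ w n)
    (fun n w _ => ?_) (fun n w hw => norm_sTerm_le _ hτ (le_of_lt hw) n)
    (y₀ := z) hS1 (summable_sTerm k hz) hS1
  unfold sTerm
  have h1 : HasDerivAt (fun w : ℂ => (2 * π * I * n * w : ℂ)) (2 * π * I * n * 1) w :=
    (hasDerivAt_id w).const_mul _
  refine (((h1.cexp).add ((h1.neg.cexp).const_mul ((-1) ^ k))).const_mul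
    (cexp (2 * π * I * τ) ^ n / (n * (1 - cexp (2 * π * I * τ) ^ n)) *
      (2 * π * I * n) ^ k)).congr_deriv ?_
  simp only [Pi.neg_apply]
  ring

lemma Sk_neg (k : ℕ) (τ z : ℂ) : Sk k τ (-z) = (-1) ^ k * Sk k τ z := by
  unfold Sk
  rw [← tsum_mul_left]
  congr 1; ext m
  unfold sTerm
  rw [mul_neg, neg_neg]
  have : ((-1:ℂ) ^ k) * (-1) ^ k = 1 := by rw [← mul_pow]; simp
  linear_combination (-(cexp (2 * π * I * τ) ^ m / (m * (1 - cexp (2 * π * I * τ) ^ m)) * (2 * π * I * m) ^ k) * cexp (-(2 * π * I * m * z))) * this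

lemma Sk_zero_odd {k : ℕ} (hk : Odd k) (τ : ℂ) : Sk k τ 0 = 0 := by
  have := Sk_neg k τ 0
  rw [neg_zero, hk.neg_one_pow] at this
  linear_combination this / 2

lemma Sk_add_one (k : ℕ) (τ z : ℂ) : Sk k τ (z + 1) = Sk k τ z := by
  unfold Sk
  congr 1; ext m
  unfold sTerm
  have e : (2 * π * I * m * (z + 1) : ℂ) = 2 * π * I * m * z + m * (2 * π * I) := by ring
  rw [e, neg_add, Complex.exp_add, Complex.exp_add, Complex.exp_neg (m * (2 * π * I)),
    Complex.exp_nat_mul_two_pi_mul_I]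
  simp

/-- Quasi-periodicity of `S₀`: the difference telescopes to the two power series of
`-log (1 - ζ⁻¹)` and `-log (1 - q ζ)`, which converge since `-Im τ < Im z < 0`. -/
lemma exp_Sk_sub {τ z : ℂ} (h1 : -τ.im < z.im) (h2 : z.im < 0) :
    cexp (Sk 0 τ z - Sk 0 τ (z + τ)) =
      (1 - cexp (-(2 * π * I * z))) / (1 - cexp (2 * π * I * (z + τ))) := by
  have hτ : 0 < τ.im := by linarith
  have s1 : |z.im| < τ.im := by rw [abs_lt]; constructor <;> linarith
  have s2 : |(z + τ).im| < τ.im := by rw [Complex.add_im, abs_lt]; constructor <;> linarith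
  have hn1 : ‖cexp (-(2 * π * I * z))‖ < 1 := by
    have := norm_q_lt_one (τ := -z) (by simpa using h2)
    rwa [mul_neg] at this
  have hn2 : ‖cexp (2 * π * I * (z + τ))‖ < 1 := norm_q_lt_one (by simp; linarith)
  have l1 := Complex.hasSum_taylorSeries_neg_log hn1
  have l2 := Complex.hasSum_taylorSeries_neg_log hn2
  have key : HasSum (fun m : ℕ => sTerm 0 τ z m - sTerm 0 τ (z + τ) m)
      (-Complex.log (1 - cexp (2 * π * I * (z + τ))) - -Complex.log (1 - cexp (-(2 * π * I * z)))) := by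
    refine (l2.sub l1).congr_fun fun m => ?_
    rcases Nat.eq_zero_or_pos m with rfl | hm
    · simp [sTerm]
    have hq := one_sub_q_pow_ne_zero hτ hm.ne'
    have hm0 : (m : ℂ) ≠ 0 := by exact_mod_cast hm.ne'
    have hQ0 : cexp (2 * π * I * τ) ^ m ≠ 0 := pow_ne_zero _ (Complex.exp_ne_zero _)
    have hZ0 : cexp (2 * π * I * m * z) ≠ 0 := Complex.exp_ne_zero _
    have e1 : cexp (2 * π * I * m * (z + τ)) = cexp (2 * π * I * m * z) * cexp (2 * π * I * τ) ^ m := by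
      rw [← Complex.exp_nat_mul, ← Complex.exp_add]; congr 1; ring
    have e2 : cexp (2 * π * I * (z + τ)) ^ m = cexp (2 * π * I * m * z) * cexp (2 * π * I * τ) ^ m := by
      rw [← Complex.exp_nat_mul, ← Complex.exp_nat_mul, ← Complex.exp_add]; congr 1; ring
    have e3 : cexp (-(2 * π * I * z)) ^ m = (cexp (2 * π * I * m * z))⁻¹ := by
      rw [← Complex.exp_nat_mul, ← Complex.exp_neg]; congr 1; ring
    unfold sTerm
    rw [Complex.exp_neg, Complex.exp_neg, e1, e2, e3]
    generalize cexp (2 * π * I * τ) ^ m = Q at *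
    generalize cexp (2 * π * I * m * z) = Z at *
    field_simp
    ring
  have key2 := ((summable_sTerm 0 s1).hasSum.sub (summable_sTerm 0 s2).hasSum).unique key
  have hne1 : 1 - cexp (-(2 * π * I * z)) ≠ 0 := by
    intro h; rw [← sub_eq_zero.1 h] at hn1; simp at hn1
  have hne2 : 1 - cexp (2 * π * I * (z + τ)) ≠ 0 := by
    intro h; rw [← sub_eq_zero.1 h] at hn2; simp at hn2
  unfold Sk
  rw [key2, show ∀ a b : ℂ, -a - -b = b - a by intros; ring, Complex.exp_sub,
    Complex.exp_log hne1, Complex.exp_log hne2]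

/-- Lambert series: `∑ m^{k+1} q^m / (1 - q^m) = ∑ σ_{k+1}(n) q^n`. -/
lemma tsum_lambert {τ : ℂ} (hτ : 0 < τ.im) (k : ℕ) :
    ∑' m : ℕ, (m : ℂ) ^ (k + 1) * cexp (2 * π * I * τ) ^ m / (1 - cexp (2 * π * I * τ) ^ m) =
      ∑' n : ℕ, (sigmaD (k + 1) (n + 1) : ℂ) * cexp (2 * π * I * τ * (n + 1)) := by
  have h := tsum_pow_div_one_sub_eq_tsum_sigma (norm_q_lt_one hτ) (k + 1)
  have h0 := PNat.coe_injective.tsum_eq (f := fun m : ℕ => (m : ℂ) ^ (k + 1) *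
    cexp (2 * π * I * τ) ^ m / (1 - cexp (2 * π * I * τ) ^ m)) (by
      intro m hm
      refine ⟨⟨m, Nat.pos_of_ne_zero ?_⟩, rfl⟩
      rintro rfl
      simp at hm)
  rw [← h0, h, tsum_pnat_eq_tsum_succ (f := fun n : ℕ => ((ArithmeticFunction.sigma (k + 1) n : ℕ) : ℂ) *
    cexp (2 * π * I * τ) ^ n)]
  congr 1; ext n
  rw [ArithmeticFunction.sigma_apply, ← Complex.exp_nat_mul]
  unfold sigmaD
  congr 2; push_cast; ring

lemma Sk_two_zero {τ : ℂ} (hτ : 0 < τ.im) : Sk 2 τ 0 = π ^ 2 * (Eis2 τ - 1) / 3 := by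
  have h := tsum_lambert hτ 0
  unfold Eis2
  rw [← h]
  unfold Sk
  rw [show ∀ x : ℂ, (π:ℂ) ^ 2 * (1 - 24 * x - 1) / 3 = (-8 * π ^ 2) * x by intro x; ring, ← tsum_mul_left]
  congr 1; ext m
  unfold sTerm
  rcases Nat.eq_zero_or_pos m with rfl | hm
  · simp
  have hm0 : (m : ℂ) ≠ 0 := by exact_mod_cast hm.ne'
  have hq := one_sub_q_pow_ne_zero hτ hm.ne'
  simp only [mul_zero, neg_zero, Complex.exp_zero]
  field_simp
  linear_combination (8:ℂ) * m * Complex.I_sq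

lemma Sk_four_zero {τ : ℂ} (hτ : 0 < τ.im) : Sk 4 τ 0 = 2 / 15 * π ^ 4 * (Eis4 τ - 1) := by
  have h := tsum_lambert hτ 2
  unfold Eis4
  rw [← h]
  unfold Sk
  rw [show ∀ x : ℂ, 2 / 15 * (π:ℂ) ^ 4 * (1 + 240 * x - 1) = (32 * π ^ 4) * x by intro x; ring,
    ← tsum_mul_left]
  congr 1; ext m
  unfold sTerm
  rcases Nat.eq_zero_or_pos m with rfl | hm
  · simp
  have hm0 : (m : ℂ) ≠ 0 := by exact_mod_cast hm.ne'
  have hq := one_sub_q_pow_ne_zero hτ hm.ne'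
  simp only [mul_zero, neg_zero, Complex.exp_zero]
  field_simp
  rw [Complex.I_pow_four]
  ring

lemma etaD_eq_eta : etaD = ModularForm.eta := by
  ext τ
  unfold etaD ModularForm.eta Function.Periodic.qParam
  congr 1
  · congr 1; push_cast; ring
  · congr 1; ext n
    rw [ModularForm.eta_q_eq_cexp]
    congr 2; ring

lemma etaD_ne_zero {τ : ℂ} (hτ : 0 < τ.im) : etaD τ ≠ 0 := by
  rw [etaD_eq_eta]; exact ModularForm.eta_ne_zero hτ

lemma Eis2_eq {τ : ℂ} (hτ : 0 < τ.im) : EisensteinSeries.E2 ⟨τ, hτ⟩ = Eis2 τ := by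
  rw [EisensteinSeries.E2_eq_tsum_cexp, Eis2, tsum_pnat_eq_tsum_succ
    (f := fun n : ℕ => ((ArithmeticFunction.sigma 1 n : ℕ) : ℂ) * cexp (2 * π * I * τ) ^ n)]
  congr 2
  congr 1; ext n
  rw [ArithmeticFunction.sigma_apply, ← Complex.exp_nat_mul]
  unfold sigmaD
  congr 2; push_cast; ring

lemma hasDerivAt_etaD {τ : ℂ} (hτ : 0 < τ.im) :
    HasDerivAt etaD (π * I / 12 * Eis2 τ * etaD τ) τ := by
  have h := ModularForm.logDeriv_eta_eq_E2 ⟨τ, hτ⟩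
  rw [Eis2_eq hτ, ← etaD_eq_eta, logDeriv_apply, div_eq_iff (etaD_ne_zero hτ)] at h
  rw [← h]
  rw [etaD_eq_eta]
  exact (ModularForm.differentiableAt_eta_of_mem_upperHalfPlaneSet hτ).hasDerivAt

/-! ### Product form of the theta function on the strip -/

lemma pi_ne : (π : ℂ) ≠ 0 := by exact_mod_cast Real.pi_ne_zero

lemma sin_pi_ne_zero {z : ℂ} (hz : ∀ n : ℤ, z ≠ n) : Complex.sin (π * z) ≠ 0 := by
  intro h
  obtain ⟨k, hk⟩ := Complex.sin_eq_zero_iff.1 h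
  apply hz k
  rw [mul_comm] at hk
  exact mul_right_cancel₀ pi_ne hk

lemma hasDerivAt_sin_pi (z : ℂ) :
    HasDerivAt (fun w : ℂ => Complex.sin (π * w)) (π * Complex.cos (π * z)) z := by
  have h1 : HasDerivAt (fun w : ℂ => (π * w : ℂ)) (π * 1) z := (hasDerivAt_id z).const_mul _
  refine h1.csin.congr_deriv ?_
  ring

lemma hasDerivAt_cos_pi (z : ℂ) :
    HasDerivAt (fun w : ℂ => Complex.cos (π * w)) (-(π * Complex.sin (π * z))) z := by
  have h1 : HasDerivAt (fun w : ℂ => (π * w : ℂ)) (π * 1) z := (hasDerivAt_id z).const_mul _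
  refine h1.ccos.congr_deriv ?_
  ring

lemma sin_pi_add_one (z : ℂ) : Complex.sin (π * (z + 1)) = -Complex.sin (π * z) := by
  rw [mul_add, mul_one, Complex.sin_add_pi]

lemma cos_pi_add_one (z : ℂ) : Complex.cos (π * (z + 1)) = -Complex.cos (π * z) := by
  rw [mul_add, mul_one, Complex.cos_add_pi]

/-- `exp(-S₀(z)) sin(πz)` has the same factor of automorphy under `z ↦ z + τ` as `ϑ`. -/
lemma exp_Sk_sin {τ z : ℂ} (h1 : -τ.im < z.im) (h2 : z.im < 0) :
    cexp (-Sk 0 τ (z + τ)) * Complex.sin (π * (z + τ)) =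
      -cexp (-(π * I * τ) - 2 * π * I * z) * (cexp (-Sk 0 τ z) * Complex.sin (π * z)) := by
  have h := exp_Sk_sub h1 h2
  have hne2 : 1 - cexp (2 * π * I * (z + τ)) ≠ 0 := by
    have hn2 : ‖cexp (2 * π * I * (z + τ))‖ < 1 := norm_q_lt_one (by simp; linarith)
    intro h; rw [← sub_eq_zero.1 h] at hn2; simp at hn2
  rw [eq_div_iff hne2, sub_eq_add_neg, Complex.exp_add] at h
  have s : ∀ w : ℂ, Complex.sin (π * w) = cexp (-(π * I * w)) * (1 - cexp (2 * π * I * w)) * I / 2 := by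
    intro w
    rw [mul_sub, ← Complex.exp_add, Complex.sin]
    ring_nf
  have s' : Complex.sin (π * z) = - cexp (π * I * z) * (1 - cexp (-(2 * π * I * z))) * I / 2 := by
    have := s (-z)
    rw [mul_neg, Complex.sin_neg] at this
    rw [← neg_neg (Complex.sin _), this]
    ring_nf
  rw [s, s', ← h]
  have e1 : cexp (-Sk 0 τ z) * cexp (Sk 0 τ z) = 1 := by rw [← Complex.exp_add]; simp
  have e2 : cexp (-(π * I * τ) - 2 * π * I * z) * cexp (π * I * z) = cexp (-(π * I * (z + τ))) := by
    rw [← Complex.exp_add]; congr 1; ring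
  rw [← e2]
  linear_combination (-(cexp (-Sk 0 τ (z + τ)) * (cexp (-(π * I * τ) - 2 * π * I * z) * cexp (π * I * z) * (1 - cexp (2 * π * I * (z + τ))) * I / 2))) * e1

lemma Th_int (τ : ℂ) (n : ℤ) : Th 0 τ n = 0 := by
  induction n using Int.induction_on with
  | zero => simpa using Th_zero_even (k := 0) (by simp) τ
  | succ k ih => push_cast at ih ⊢; rw [Th_add_one, ih, neg_zero]
  | pred k ih =>
    have := Th_add_one τ ((-k - 1 : ℤ) : ℂ)
    push_cast at this ih ⊢
    rw [sub_add_cancel, ih] at this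
    exact neg_eq_zero.1 this.symm

lemma eventually_strip {τ z : ℂ} (hz : |z.im| < τ.im) : ∀ᶠ w in 𝓝 z, |w.im| < τ.im :=
  (isOpen_strip τ.im).mem_nhds hz

lemma eventually_nonint {z : ℂ} (hz : ∀ n : ℤ, z ≠ n) : ∀ᶠ w in 𝓝 z, ∀ n : ℤ, w ≠ (n : ℂ) := by
  filter_upwards [Complex.isClosed_range_intCast.isOpen_compl.mem_nhds (x := z)
    (by rintro ⟨n, hn⟩; exact hz n hn.symm)] with v hv n hn
  exact hv ⟨n, hn.symm⟩

lemma differentiableAt_dslope {f : ℂ → ℂ} (hf : ∀ᶠ w in 𝓝 0, DifferentiableAt ℂ f w) :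
    DifferentiableAt ℂ (dslope f 0) 0 := by
  obtain ⟨s, hs, hf'⟩ := hf.exists_mem
  have : DifferentiableOn ℂ f s := fun w hw => (hf' w hw).differentiableWithinAt
  exact ((Complex.differentiableOn_dslope hs).2 this).differentiableAt hs

lemma eq_mul_dslope {f : ℂ → ℂ} (hf : f 0 = 0) (z : ℂ) : f z = z * dslope f 0 z := by
  have := sub_smul_dslope f 0 z
  rw [hf] at this
  simpa using this.symm

/-- The triple product up to a factor depending on `τ` only: the quotient of `ϑ` by
`exp(-S₀(z)) sin(πz)` is doubly periodic and has removable singularities at the integers. -/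
theorem exists_factor {τ : ℂ} (hτ : 0 < τ.im) : ∃ C : ℂ, ∀ z : ℂ, |z.im| < τ.im →
    Th 0 τ z = C * (cexp (-Sk 0 τ z) * Complex.sin (π * z)) := by
  have h0s : |(0:ℂ).im| < τ.im := by simpa using hτ
  set g : ℂ → ℂ := fun z => dslope (Th 0 τ) 0 z /
    (cexp (-Sk 0 τ z) * dslope (fun w : ℂ => Complex.sin (π * w)) 0 z) with hg
  have hSd : ∀ z : ℂ, |z.im| < τ.im → DifferentiableAt ℂ (fun w => cexp (-Sk 0 τ w)) z :=
    fun z hz => (hasDerivAt_Sk 0 hz).differentiableAt.neg.cexp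
  have hds : dslope (fun w : ℂ => Complex.sin (π * w)) 0 0 = π := by
    rw [dslope_same, (hasDerivAt_sin_pi 0).deriv]; simp
  refine ⟨g 0, fun z hz => ?_⟩
  by_cases h : ∃ n : ℤ, z = n
  · obtain ⟨n, rfl⟩ := h
    rw [Th_int, mul_comm (π:ℂ), Complex.sin_int_mul_pi]; simp
  push Not at h
  have key := strip_const hτ
    (f := fun z => Th 0 τ z / (cexp (-Sk 0 τ z) * Complex.sin (π * z))) (g := g)
    ?_ ?_ ?_ ?_ ?_ hz h
  · rw [← key]
    have := sin_pi_ne_zero h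
    have := Complex.exp_ne_zero (-Sk 0 τ z)
    field_simp
  · intro w hw hn
    exact (hasDerivAt_Th_z 0 hτ w).differentiableAt.div
      ((hSd w hw).mul (hasDerivAt_sin_pi w).differentiableAt)
      (mul_ne_zero (Complex.exp_ne_zero _) (sin_pi_ne_zero hn))
  · intro w hw hn
    simp only [Th_add_one, Sk_add_one, sin_pi_add_one, mul_neg, neg_div_neg_eq]
  · intro w h1 h2
    have hE := Complex.exp_ne_zero (-(π * I * τ) - 2 * π * I * w)
    rw [Th_add_tau, exp_Sk_sin h1 h2, mul_div_mul_left _ _ (neg_ne_zero.2 hE)]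
  · refine DifferentiableAt.div ?_ (DifferentiableAt.mul (hSd 0 h0s) ?_) ?_
    · exact differentiableAt_dslope (.of_forall fun w => (hasDerivAt_Th_z 0 hτ w).differentiableAt)
    · exact differentiableAt_dslope (.of_forall fun w => (hasDerivAt_sin_pi w).differentiableAt)
    · rw [hds]; exact mul_ne_zero (Complex.exp_ne_zero _) pi_ne
  · filter_upwards [self_mem_nhdsWithin] with w hw
    have hw : w ≠ 0 := hw
    simp only [hg]
    rw [eq_mul_dslope (f := Th 0 τ) (Th_zero_even (by simp) τ) w,
      eq_mul_dslope (f := fun w : ℂ => Complex.sin (π * w)) (by simp) w,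
      mul_left_comm, mul_div_mul_left _ _ hw]

/-- An entire function vanishing at the non-integers of a strip around the real axis is zero. -/
lemma eq_zero_of_strip {f : ℂ → ℂ} (hf : Differentiable ℂ f) {h : ℝ} (hh : 0 < h)
    (h0 : ∀ z : ℂ, |z.im| < h → (∀ n : ℤ, z ≠ n) → f z = 0) (z : ℂ) : f z = 0 := by
  have hfa : AnalyticOnNhd ℂ f Set.univ := fun w _ => hf.analyticAt w
  have hz0 : ∀ n : ℤ, (1 / 2 : ℂ) ≠ n := by
    intro n hn
    have : (1 : ℂ) = ((2 * n : ℤ) : ℂ) := by push_cast; rw [← hn]; norm_num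
    have : (1:ℤ) = 2 * n := by exact_mod_cast this
    omega
  have hev : f =ᶠ[𝓝 (1 / 2 : ℂ)] 0 := by
    have hs : |(1 / 2 : ℂ).im| < h := by norm_num; exact hh
    filter_upwards [(isOpen_strip h).mem_nhds hs, eventually_nonint hz0] with w hw hn
    exact h0 w hw hn
  have := hfa.eqOn_zero_of_preconnected_of_eventuallyEq_zero isPreconnected_univ
    (Set.mem_univ _) hev
  exact this (Set.mem_univ z)

/-! ### Logarithmic derivatives on the strip and the Weierstrass differential equation -/

/-- The logarithmic derivative of `exp(-S₀(z)) sin(πz)`. On the strip it equals `ϑ'/ϑ`. -/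
def Lam1 (τ z : ℂ) : ℂ := π * Complex.cos (π * z) / Complex.sin (π * z) - Sk 1 τ z

/-- The derivative of `Lam1`. -/
def Lam2 (τ z : ℂ) : ℂ := -π ^ 2 / Complex.sin (π * z) ^ 2 - Sk 2 τ z

/-- The derivative of `Lam2`. -/
def Lam3 (τ z : ℂ) : ℂ := 2 * π ^ 3 * Complex.cos (π * z) / Complex.sin (π * z) ^ 3 - Sk 3 τ z

/-- The derivative of `Lam3`, with `cos²` eliminated. -/
def Lam4 (τ z : ℂ) : ℂ :=
  2 * π ^ 4 * (2 / Complex.sin (π * z) ^ 2 - 3 / Complex.sin (π * z) ^ 4) - Sk 4 τ z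

lemma hasDerivAt_Lam1 {τ z : ℂ} (hz : |z.im| < τ.im) (hn : ∀ n : ℤ, z ≠ n) :
    HasDerivAt (Lam1 τ) (Lam2 τ z) z := by
  have hs := sin_pi_ne_zero hn
  have h := ((((hasDerivAt_cos_pi z).const_mul (π:ℂ)).div (hasDerivAt_sin_pi z) hs).sub
    (hasDerivAt_Sk 1 hz))
  refine h.congr_deriv ?_
  unfold Lam2
  have := Complex.sin_sq_add_cos_sq (π * z)
  field_simp
  linear_combination (-(π:ℂ)^2) * this

lemma hasDerivAt_Lam2 {τ z : ℂ} (hz : |z.im| < τ.im) (hn : ∀ n : ℤ, z ≠ n) :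
    HasDerivAt (Lam2 τ) (Lam3 τ z) z := by
  have hs := sin_pi_ne_zero hn
  have h := (((hasDerivAt_const z (-(π:ℂ)^2)).div ((hasDerivAt_sin_pi z).pow 2)
    (pow_ne_zero 2 hs)).sub (hasDerivAt_Sk 2 hz))
  refine h.congr_deriv ?_
  unfold Lam3
  simp only [Pi.pow_apply]
  field_simp
  ring

lemma hasDerivAt_Lam3 {τ z : ℂ} (hz : |z.im| < τ.im) (hn : ∀ n : ℤ, z ≠ n) :
    HasDerivAt (Lam3 τ) (Lam4 τ z) z := by
  have hs := sin_pi_ne_zero hn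
  have h := ((((hasDerivAt_cos_pi z).const_mul (2 * (π:ℂ)^3)).div ((hasDerivAt_sin_pi z).pow 3)
    (pow_ne_zero 3 hs)).sub (hasDerivAt_Sk 3 hz))
  refine h.congr_deriv ?_
  unfold Lam4
  have := Complex.sin_sq_add_cos_sq (π * z)
  simp only [Pi.pow_apply]
  field_simp
  linear_combination (-6 * (π:ℂ)^4 * Complex.sin (π * z) ^ 2) * this

lemma hasDerivAt_expSin {τ z : ℂ} (hz : |z.im| < τ.im) (hn : ∀ n : ℤ, z ≠ n) :
    HasDerivAt (fun w => cexp (-Sk 0 τ w) * Complex.sin (π * w))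
    (Lam1 τ z * (cexp (-Sk 0 τ z) * Complex.sin (π * z))) z := by
  have hs := sin_pi_ne_zero hn
  refine ((hasDerivAt_Sk 0 hz).neg.cexp.mul (hasDerivAt_sin_pi z)).congr_deriv ?_
  unfold Lam1
  simp only [Pi.neg_apply]
  field_simp
  ring

lemma Lam_add_one (τ z : ℂ) : Lam2 τ (z + 1) = Lam2 τ z ∧ Lam3 τ (z + 1) = Lam3 τ z ∧
    Lam4 τ (z + 1) = Lam4 τ z := by
  unfold Lam2 Lam3 Lam4
  simp only [sin_pi_add_one, cos_pi_add_one, Sk_add_one]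
  refine ⟨by rw [even_two.neg_pow], ?_, by rw [even_two.neg_pow, (show Even 4 by decide).neg_pow]⟩
  rw [(show Odd 3 by decide).neg_pow, mul_neg, neg_div_neg_eq]

lemma nonint_of_im {z : ℂ} (h : z.im ≠ 0) (n : ℤ) : z ≠ n := by
  rintro rfl; simp at h

/-- If `f` changes by a constant under `z ↦ z + τ`, then its derivative has period `τ`. -/
lemma deriv_shift_eq {f f' : ℂ → ℂ} {τ c : ℂ}
    (hf : ∀ z : ℂ, |z.im| < τ.im → (∀ n : ℤ, z ≠ n) → HasDerivAt f (f' z) z)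
    (h : ∀ z : ℂ, -τ.im < z.im → z.im < 0 → f (z + τ) = f z + c) {z : ℂ}
    (h1 : -τ.im < z.im) (h2 : z.im < 0) : f' (z + τ) = f' z := by
  have s1 : |z.im| < τ.im := by rw [abs_lt]; constructor <;> linarith
  have s2 : |(z + τ).im| < τ.im := by rw [Complex.add_im, abs_lt]; constructor <;> linarith
  have d1 := (hf z s1 (nonint_of_im h2.ne)).add_const c
  have d2 := (hf (z + τ) s2 (nonint_of_im (by simp; linarith))).comp_add_const z τ
  refine d2.unique (d1.congr_of_eventuallyEq ?_)
  have : IsOpen {w : ℂ | -τ.im < w.im ∧ w.im < 0} :=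
    (isOpen_lt continuous_const Complex.continuous_im).inter
      (isOpen_lt Complex.continuous_im continuous_const)
  filter_upwards [this.mem_nhds ⟨h1, h2⟩] with w hw
  exact h w hw.1 hw.2

lemma Lam1_add_tau {τ z : ℂ} (h1 : -τ.im < z.im) (h2 : z.im < 0) :
    Lam1 τ (z + τ) = Lam1 τ z + -(2 * π * I) := by
  have s1 : |z.im| < τ.im := by rw [abs_lt]; constructor <;> linarith
  have s2 : |(z + τ).im| < τ.im := by rw [Complex.add_im, abs_lt]; constructor <;> linarith
  have hn1 : ∀ n : ℤ, z ≠ n := nonint_of_im h2.ne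
  have hn2 : ∀ n : ℤ, z + τ ≠ n := nonint_of_im (by simp; linarith)
  have d1 := hasDerivAt_expSin s1 hn1
  have d2 := (hasDerivAt_expSin s2 hn2).comp_add_const z τ
  have d3 : HasDerivAt (fun w : ℂ => -cexp (-(π * I * τ) - 2 * π * I * w))
      (2 * π * I * cexp (-(π * I * τ) - 2 * π * I * z)) z := by
    have : HasDerivAt (fun w : ℂ => (-(π * I * τ) - 2 * π * I * w : ℂ)) (-(2 * π * I * 1)) z :=
      ((hasDerivAt_id z).const_mul _).const_sub _
    refine this.cexp.neg.congr_deriv ?_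
    ring
  have key := d2.unique ((d3.mul d1).congr_of_eventuallyEq ?_)
  · rw [exp_Sk_sin h1 h2] at key
    have hs := mul_ne_zero (Complex.exp_ne_zero (-(π * I * τ) - 2 * π * I * z))
      (mul_ne_zero (Complex.exp_ne_zero (-Sk 0 τ z)) (sin_pi_ne_zero hn1))
    apply mul_right_cancel₀ hs
    linear_combination -key
  · have : IsOpen {w : ℂ | -τ.im < w.im ∧ w.im < 0} :=
      (isOpen_lt continuous_const Complex.continuous_im).inter
        (isOpen_lt Complex.continuous_im continuous_const)
    filter_upwards [this.mem_nhds ⟨h1, h2⟩] with w hw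
    exact exp_Sk_sin hw.1 hw.2

lemma Lam2_add_tau {τ z : ℂ} (h1 : -τ.im < z.im) (h2 : z.im < 0) :
    Lam2 τ (z + τ) = Lam2 τ z :=
  deriv_shift_eq (fun _ a b => hasDerivAt_Lam1 a b) (fun _ a b => Lam1_add_tau a b) h1 h2

lemma Lam3_add_tau {τ z : ℂ} (h1 : -τ.im < z.im) (h2 : z.im < 0) :
    Lam3 τ (z + τ) = Lam3 τ z :=
  deriv_shift_eq (c := 0) (fun _ a b => hasDerivAt_Lam2 a b)
    (fun _ a b => by rw [Lam2_add_tau a b, add_zero]) h1 h2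

lemma Lam4_add_tau {τ z : ℂ} (h1 : -τ.im < z.im) (h2 : z.im < 0) :
    Lam4 τ (z + τ) = Lam4 τ z :=
  deriv_shift_eq (c := 0) (fun _ a b => hasDerivAt_Lam3 a b)
    (fun _ a b => by rw [Lam3_add_tau a b, add_zero]) h1 h2

/-- Second-order Taylor division: a function with a double zero at `0` is `w² b(w)`, and
`b(0)` is half its second derivative there. -/
lemma exists_pow_mul {f f1 f2 : ℂ → ℂ} (h1 : ∀ᶠ w in 𝓝 0, HasDerivAt f (f1 w) w)
    (h2 : ∀ᶠ w in 𝓝 0, HasDerivAt f1 (f2 w) w) (z0 : f 0 = 0) (z1 : f1 0 = 0) :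
    ∃ b : ℂ → ℂ, AnalyticAt ℂ b 0 ∧ (∀ᶠ w in 𝓝 0, f w = w ^ 2 * b w) ∧ f2 0 = 2 * b 0 := by
  have hfa : AnalyticAt ℂ f 0 :=
    Complex.analyticAt_iff_eventually_differentiableAt.2 (h1.mono fun w h => h.differentiableAt)
  have hord : ((2 : ℕ) : ℕ∞) ≤ analyticOrderAt f 0 := by
    rw [natCast_le_analyticOrderAt_iff_iteratedDeriv_eq_zero hfa]
    intro i hi
    interval_cases i
    · simpa using z0
    · rw [iteratedDeriv_one, h1.self_of_nhds.deriv, z1]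
  obtain ⟨b, hb, hfb⟩ := (natCast_le_analyticOrderAt hfa).1 hord
  simp only [sub_zero, smul_eq_mul] at hfb
  refine ⟨b, hb, hfb, ?_⟩
  have e1 : ∀ᶠ w in 𝓝 0, f1 w = 2 * w * b w + w ^ 2 * deriv b w := by
    filter_upwards [hfb.eventually_nhds, h1, hb.eventually_analyticAt] with w hw hd ha
    have := ((hasDerivAt_id w).pow 2).mul ha.differentiableAt.hasDerivAt
    refine hd.unique ((this.congr_of_eventuallyEq ?_).congr_deriv ?_)
    · filter_upwards [hw] with v hv
      simpa using hv
    · simp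
  have := (((hasDerivAt_id (0:ℂ)).const_mul 2).mul hb.differentiableAt.hasDerivAt).add
    (((hasDerivAt_id (0:ℂ)).pow 2).mul hb.deriv.differentiableAt.hasDerivAt)
  have h3 := h2.self_of_nhds.unique (this.congr_of_eventuallyEq (by
    filter_upwards [e1] with w hw
    simpa using hw))
  rw [h3]; simp

/-- The differential equation of `℘` on the strip. The left side is doubly periodic; the
poles at `0` cancel because `E₂ - 1 - (3/π²) S₀''` has a double zero there, and the constant is
computed from `S₀''''(0)`. -/
theorem lam_ode {τ z : ℂ} (hz : |z.im| < τ.im) (hn : ∀ n : ℤ, z ≠ n) :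
    (Eis2 τ + 3 / π ^ 2 * Lam2 τ z) ^ 2 + 3 / (2 * π ^ 4) * Lam4 τ z = Eis4 τ := by
  have hτ : 0 < τ.im := (abs_nonneg _).trans_lt hz
  have h0s : |(0:ℂ).im| < τ.im := by simpa using hτ
  have hpi := pi_ne
  -- `E₂ + (3/π²) Lam2 = 1 + B - 3 / sin²`, and `B` vanishes doubly at `0`
  set B : ℂ → ℂ := fun w => Eis2 τ - 1 - 3 / π ^ 2 * Sk 2 τ w with hB
  have hBd : ∀ w : ℂ, |w.im| < τ.im → HasDerivAt B (-(3 / π ^ 2 * Sk 3 τ w)) w := fun w hw =>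
    ((hasDerivAt_Sk 2 hw).const_mul _).const_sub _
  have hBd1 : ∀ w : ℂ, |w.im| < τ.im →
      HasDerivAt (fun w => -(3 / π ^ 2 * Sk 3 τ w)) (-(3 / π ^ 2 * Sk 4 τ w)) w := fun w hw =>
    ((hasDerivAt_Sk 3 hw).const_mul _).neg
  obtain ⟨b, hb, hBb, hb2⟩ := exists_pow_mul ((eventually_strip h0s).mono hBd)
    ((eventually_strip h0s).mono hBd1) (by simp only [hB]; rw [Sk_two_zero hτ]; field_simp; ring)
    (by rw [Sk_zero_odd (by decide)]; simp)
  set σ := dslope (fun w : ℂ => Complex.sin (π * w)) 0 with hσ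
  have hσ0 : σ 0 = π := by
    rw [hσ, dslope_same, (hasDerivAt_sin_pi 0).deriv]; simp
  set g : ℂ → ℂ := fun w => 1 + 2 * B w - 6 * (b w / σ w ^ 2) + B w ^ 2
    - 3 / (2 * π ^ 4) * Sk 4 τ w with hg
  have key := strip_const hτ (f := fun z => (Eis2 τ + 3 / π ^ 2 * Lam2 τ z) ^ 2
    + 3 / (2 * π ^ 4) * Lam4 τ z) (g := g) ?_ ?_ ?_ ?_ ?_ hz hn
  · refine key.trans ?_
    have hB0 : B 0 = 0 := by simp only [hB]; rw [Sk_two_zero hτ]; field_simp; ring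
    simp only [hg]
    rw [hB0, hσ0, show b 0 = -(3 / π ^ 2 * Sk 4 τ 0) / 2 by rw [hb2]; ring, Sk_four_zero hτ]
    field_simp
    ring
  · intro w hw hn
    have d4 : DifferentiableAt ℂ (Lam4 τ) w := by
      have hs := sin_pi_ne_zero hn
      have h1 := (hasDerivAt_sin_pi w).differentiableAt
      have h2 := (hasDerivAt_Sk 4 hw).differentiableAt
      have h3 : DifferentiableAt ℂ (fun z => 2 * (π:ℂ) ^ 4 * (2 / Complex.sin (π * z) ^ 2 -
          3 / Complex.sin (π * z) ^ 4)) w :=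
        (((differentiableAt_const _).div (h1.pow 2) (pow_ne_zero 2 hs)).sub
          ((differentiableAt_const _).div (h1.pow 4) (pow_ne_zero 4 hs))).const_mul _
      exact h3.sub h2
    exact ((((hasDerivAt_Lam2 hw hn).differentiableAt.const_mul _).const_add _).pow 2).add
      (d4.const_mul _)
  · intro w _ _
    simp only [(Lam_add_one τ w).1, (Lam_add_one τ w).2.2]
  · intro w h1 h2
    simp only [Lam2_add_tau h1 h2, Lam4_add_tau h1 h2]
  · have hσd : DifferentiableAt ℂ σ 0 :=
      differentiableAt_dslope (.of_forall fun w => (hasDerivAt_sin_pi w).differentiableAt)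
    have hBd0 := (hBd 0 h0s).differentiableAt
    have h4 := (hasDerivAt_Sk 4 h0s).differentiableAt
    have hq : DifferentiableAt ℂ (fun w => b w / σ w ^ 2) 0 :=
      hb.differentiableAt.div (hσd.pow 2) (by rw [hσ0]; exact pow_ne_zero 2 hpi)
    exact ((((hBd0.const_mul 2).const_add 1).sub (hq.const_mul 6)).add (hBd0.pow 2)).sub
      (h4.const_mul _)
  · have hne : ∀ᶠ w in 𝓝[≠] (0:ℂ), σ w ≠ 0 := by
      have hσd : DifferentiableAt ℂ σ 0 :=
        differentiableAt_dslope (.of_forall fun w => (hasDerivAt_sin_pi w).differentiableAt)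
      exact (hσd.continuousAt.eventually_ne (by rw [hσ0]; exact hpi)).filter_mono
        nhdsWithin_le_nhds
    filter_upwards [self_mem_nhdsWithin, hne, hBb.filter_mono nhdsWithin_le_nhds] with w hw hw2 hw3
    have hw : w ≠ 0 := hw
    have hs : Complex.sin (π * w) = w * σ w :=
      eq_mul_dslope (f := fun w : ℂ => Complex.sin (π * w)) (by simp) w
    have hS : Sk 2 τ w = π ^ 2 / 3 * (Eis2 τ - 1 - w ^ 2 * b w) := by
      rw [← hw3]; simp only [hB]; field_simp; ring
    simp only [hg, Lam2, Lam4]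
    rw [hw3, hs, hS]
    field_simp
    ring

/-! ### The duplication formula, and extension to the whole plane -/

lemma Lam3_neg (τ z : ℂ) : Lam3 τ (-z) = -Lam3 τ z := by
  unfold Lam3
  rw [Sk_neg, mul_neg, Complex.sin_neg, Complex.cos_neg, (show Odd 3 by decide).neg_pow,
    (show Odd 3 by decide).neg_one_pow, div_neg]
  ring

/-- The duplication formula on the strip. With `κ` chosen to match the leading coefficients at
`0`, the function `ϑ(2z)/ϑ(z)⁴ - κ (log ϑ)'''` is doubly periodic without poles, hence constant, and
it is odd, hence zero. -/
theorem exists_duplication {τ C : ℂ} (hτ : 0 < τ.im) (hC0 : C ≠ 0)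
    (hC : ∀ z : ℂ, |z.im| < τ.im → Th 0 τ z = C * (cexp (-Sk 0 τ z) * Complex.sin (π * z))) :
    ∃ κ : ℂ, ∀ z : ℂ, |z.im| < τ.im → (∀ n : ℤ, z ≠ n) →
      Th 0 τ (2 * z) = κ * Lam3 τ z * Th 0 τ z ^ 4 := by
  have h0s : |(0:ℂ).im| < τ.im := by simpa using hτ
  have hpi := pi_ne
  have hThne : ∀ z : ℂ, |z.im| < τ.im → (∀ n : ℤ, z ≠ n) → Th 0 τ z ≠ 0 := by
    intro z hz hn
    rw [hC z hz]
    exact mul_ne_zero hC0 (mul_ne_zero (Complex.exp_ne_zero _) (sin_pi_ne_zero hn))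
  have h2s : ∀ᶠ w in 𝓝 (0:ℂ), |(2 * w).im| < τ.im := by
    have hc : Continuous fun w : ℂ => |(2 * w).im| := by fun_prop
    exact (isOpen_lt hc continuous_const).mem_nhds (by simpa using hτ)
  have hmul2 : ∀ w : ℂ, HasDerivAt (fun w : ℂ => 2 * w) 2 w := fun w => by
    simpa using (hasDerivAt_id w).const_mul (2:ℂ)
  -- `E - E 0` is `w² b` by evenness, and `b` vanishes at `0` as the second derivative of `E` does
  set E : ℂ → ℂ := fun w => cexp (4 * Sk 0 τ w - Sk 0 τ (2 * w)) with hE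
  have hE1 : ∀ᶠ w in 𝓝 (0:ℂ), HasDerivAt (fun w => E w - E 0)
      (E w * (4 * Sk 1 τ w - 2 * Sk 1 τ (2 * w))) w := by
    filter_upwards [h2s, eventually_strip h0s] with w hw2 hw
    have h1 := (hasDerivAt_Sk 0 hw).const_mul 4
    have h2 := (hasDerivAt_Sk 0 hw2).comp w (hmul2 w)
    refine ((h1.sub h2).cexp.sub_const _).congr_deriv ?_
    simp only [hE, Pi.sub_apply, Function.comp]
    ring
  have hE2 : ∀ᶠ w in 𝓝 (0:ℂ), HasDerivAt (fun w => E w * (4 * Sk 1 τ w - 2 * Sk 1 τ (2 * w)))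
      (E w * ((4 * Sk 1 τ w - 2 * Sk 1 τ (2 * w)) ^ 2 + 4 * Sk 2 τ w - 4 * Sk 2 τ (2 * w))) w := by
    filter_upwards [h2s, eventually_strip h0s, hE1] with w hw2 hw hE
    have h1 := (hasDerivAt_Sk 1 hw).const_mul 4
    have h2 := ((hasDerivAt_Sk 1 hw2).comp w (hmul2 w)).const_mul 2
    have h3 : HasDerivAt E (E w * (4 * Sk 1 τ w - 2 * Sk 1 τ (2 * w))) w := by
      simpa using hE.add_const (E 0)
    refine (h3.mul (h1.sub h2)).congr_deriv ?_
    simp only [Pi.sub_apply, Function.comp]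
    ring
  obtain ⟨b, hb, hEb, hb0⟩ := exists_pow_mul hE1 hE2 (by simp) (by
    simp only [mul_zero]; rw [Sk_zero_odd (by decide)]; simp)
  have hb0 : b 0 = 0 := by
    simp only [mul_zero] at hb0
    rw [Sk_zero_odd (k := 1) (by decide)] at hb0
    have : 2 * b 0 = 0 := by rw [← hb0]; ring
    simpa using this
  set σ := dslope (fun w : ℂ => Complex.sin (π * w)) 0 with hσ
  have hσ0 : σ 0 = π := by
    rw [hσ, dslope_same, (hasDerivAt_sin_pi 0).deriv]; simp
  have hσd : DifferentiableAt ℂ σ 0 :=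
    differentiableAt_dslope (.of_forall fun w => (hasDerivAt_sin_pi w).differentiableAt)
  have hdb : DifferentiableAt ℂ (dslope b 0) 0 :=
    differentiableAt_dslope (hb.eventually_analyticAt.mono fun w h => h.differentiableAt)
  set κ : ℂ := E 0 / (C ^ 3 * π ^ 3) with hκ
  set f : ℂ → ℂ := fun z => Th 0 τ (2 * z) / Th 0 τ z ^ 4 - κ * Lam3 τ z with hf
  set g : ℂ → ℂ := fun w => 2 / C ^ 3 * Complex.cos (π * w) * dslope b 0 w / σ w ^ 3
    + κ * Sk 3 τ w with hg
  have hconst : ∀ z : ℂ, |z.im| < τ.im → (∀ n : ℤ, z ≠ n) → f z = g 0 := by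
    intro z hz hn
    refine strip_const hτ (f := f) (g := g) ?_ ?_ ?_ ?_ ?_ hz hn
    · intro w hw hn
      have h1 := ((hasDerivAt_Th_z 0 hτ (2 * w)).comp w (hmul2 w)).differentiableAt
      have h2 := (hasDerivAt_Th_z 0 hτ w).differentiableAt
      have h3 := (hasDerivAt_Lam3 hw hn).differentiableAt
      exact (h1.div (h2.pow 4) (pow_ne_zero 4 (hThne w hw hn))).sub (h3.const_mul κ)
    · intro w hw hn
      simp only [hf]
      rw [(Lam_add_one τ w).2.1, Th_add_one, (show Even 4 by decide).neg_pow,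
        show 2 * (w + 1) = 2 * w + 1 + 1 by ring, Th_add_one, Th_add_one, neg_neg]
    · intro w h1 h2
      simp only [hf]
      rw [Lam3_add_tau h1 h2, show 2 * (w + τ) = 2 * w + τ + τ by ring, Th_add_tau, Th_add_tau,
        Th_add_tau τ w]
      have e : cexp (-(π * I * τ) - 2 * π * I * (2 * w + τ)) * cexp (-(π * I * τ) - 2 * π * I * (2 * w))
          = cexp (-(π * I * τ) - 2 * π * I * w) ^ 4 := by
        rw [← Complex.exp_add, ← Complex.exp_nat_mul]; congr 1; push_cast; ring
      rw [← mul_assoc, neg_mul_neg, e, mul_pow, (show Even 4 by decide).neg_pow,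
        mul_div_mul_left _ _ (pow_ne_zero 4 (Complex.exp_ne_zero _))]
    · have hc := (hasDerivAt_cos_pi 0).differentiableAt
      have h3 := (hasDerivAt_Sk 3 h0s).differentiableAt
      exact (((hc.const_mul _).mul hdb).div (hσd.pow 3)
        (by rw [Pi.pow_apply, hσ0]; exact pow_ne_zero 3 hpi)).add (h3.const_mul _)
    · have hne : ∀ᶠ w in 𝓝[≠] (0:ℂ), σ w ≠ 0 :=
        (hσd.continuousAt.eventually_ne (by rw [hσ0]; exact hpi)).filter_mono nhdsWithin_le_nhds
      filter_upwards [self_mem_nhdsWithin, hne, hEb.filter_mono nhdsWithin_le_nhds,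
        h2s.filter_mono nhdsWithin_le_nhds,
        (eventually_strip h0s).filter_mono nhdsWithin_le_nhds] with w hw hw2 hw3 hw4 hw5
      have hw : w ≠ 0 := hw
      have hs : Complex.sin (π * w) = w * σ w :=
        eq_mul_dslope (f := fun w : ℂ => Complex.sin (π * w)) (by simp) w
      have hbb : b w = w * dslope b 0 w := eq_mul_dslope hb0 w
      have hEw : cexp (-Sk 0 τ (2 * w)) = E w * cexp (-Sk 0 τ w) ^ 4 := by
        simp only [hE]
        rw [← Complex.exp_nat_mul, ← Complex.exp_add]; congr 1; push_cast; ring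
      have hEE : E w = E 0 + w ^ 2 * (w * dslope b 0 w) := by rw [← hbb, ← hw3]; ring
      simp only [hf, hg, Lam3, hκ]
      rw [hC _ hw4, hC _ hw5, mul_left_comm (π:ℂ), Complex.sin_two_mul, hEw, hs, hEE]
      have hx := Complex.exp_ne_zero (-Sk 0 τ w)
      field_simp
      ring
  refine ⟨κ, fun z hz hn => ?_⟩
  have hz' : |(-z).im| < τ.im := by simpa using hz
  have hn' : ∀ n : ℤ, -z ≠ n := fun n h => hn (-n) (by push_cast; rw [← h, neg_neg])
  have e1 := hconst z hz hn
  have e2 := hconst (-z) hz' hn'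
  have e3 : f (-z) = -f z := by
    simp only [hf]
    rw [Lam3_neg, mul_neg, Th_neg, Th_neg]
    simp only [pow_zero, neg_mul, one_mul]
    rw [(show Even 4 by decide).neg_pow]
    ring
  have e4 : f z = 0 := by
    have : f z = -f z := by rw [← e3, e1, e2]
    linear_combination this / 2
  have h4 := pow_ne_zero 4 (hThne z hz hn)
  simp only [hf] at e4
  rw [sub_eq_zero, div_eq_iff h4] at e4
  exact e4

/-- If the constant of `exists_factor` were zero, `ϑ(τ, ·)` would vanish identically; so one point
with `ϑ ≠ 0` is enough. -/
lemma exists_factor_ne_zero {τ z₀ : ℂ} (hτ : 0 < τ.im) (hz₀ : Th 0 τ z₀ ≠ 0) :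
    ∃ C : ℂ, C ≠ 0 ∧ ∀ z : ℂ, |z.im| < τ.im →
      Th 0 τ z = C * (cexp (-Sk 0 τ z) * Complex.sin (π * z)) := by
  obtain ⟨C, hC⟩ := exists_factor hτ
  refine ⟨C, ?_, hC⟩
  rintro rfl
  refine hz₀ (eq_zero_of_strip (fun z => (hasDerivAt_Th_z 0 hτ z).differentiableAt) hτ
    (fun z hz _ => ?_) z₀)
  rw [hC z hz, zero_mul]

/-- Derivatives of `ϑ` in terms of its logarithmic derivatives, by the Leibniz rule applied to
`ϑ' = Lam1 · ϑ`. -/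
lemma Th_strip {τ C : ℂ} (hτ : 0 < τ.im)
    (hC : ∀ z : ℂ, |z.im| < τ.im → Th 0 τ z = C * (cexp (-Sk 0 τ z) * Complex.sin (π * z)))
    {z : ℂ} (hz : |z.im| < τ.im) (hn : ∀ n : ℤ, z ≠ n) :
    Th 1 τ z = Lam1 τ z * Th 0 τ z ∧
    Th 2 τ z = Lam2 τ z * Th 0 τ z + Lam1 τ z * Th 1 τ z ∧
    Th 3 τ z = Lam3 τ z * Th 0 τ z + 2 * Lam2 τ z * Th 1 τ z + Lam1 τ z * Th 2 τ z ∧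
    Th 4 τ z = Lam4 τ z * Th 0 τ z + 3 * Lam3 τ z * Th 1 τ z + 3 * Lam2 τ z * Th 2 τ z
      + Lam1 τ z * Th 3 τ z := by
  have ev : ∀ {z : ℂ}, |z.im| < τ.im → (∀ n : ℤ, z ≠ n) →
      ∀ᶠ w in 𝓝 z, |w.im| < τ.im ∧ ∀ n : ℤ, w ≠ (n : ℂ) := fun hz hn =>
    (eventually_strip hz).and (eventually_nonint hn)
  have t1 : ∀ z : ℂ, |z.im| < τ.im → (∀ n : ℤ, z ≠ n) → Th 1 τ z = Lam1 τ z * Th 0 τ z := by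
    intro z hz hn
    refine (hasDerivAt_Th_z 0 hτ z).unique ?_
    rw [hC z hz]
    refine (((hasDerivAt_expSin hz hn).const_mul C).congr_of_eventuallyEq ?_).congr_deriv (by ring)
    filter_upwards [eventually_strip hz] with w hw using hC w hw
  have t2 : ∀ z : ℂ, |z.im| < τ.im → (∀ n : ℤ, z ≠ n) →
      Th 2 τ z = Lam2 τ z * Th 0 τ z + Lam1 τ z * Th 1 τ z := by
    intro z hz hn
    refine (hasDerivAt_Th_z 1 hτ z).unique ?_
    refine ((hasDerivAt_Lam1 hz hn).mul (hasDerivAt_Th_z 0 hτ z)).congr_of_eventuallyEq ?_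
    filter_upwards [ev hz hn] with w hw using t1 w hw.1 hw.2
  have t3 : ∀ z : ℂ, |z.im| < τ.im → (∀ n : ℤ, z ≠ n) →
      Th 3 τ z = Lam3 τ z * Th 0 τ z + 2 * Lam2 τ z * Th 1 τ z + Lam1 τ z * Th 2 τ z := by
    intro z hz hn
    refine (hasDerivAt_Th_z 2 hτ z).unique ?_
    refine ((((hasDerivAt_Lam2 hz hn).mul (hasDerivAt_Th_z 0 hτ z)).add
      ((hasDerivAt_Lam1 hz hn).mul (hasDerivAt_Th_z 1 hτ z))).congr_of_eventuallyEq ?_).congr_deriv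
      (by ring)
    filter_upwards [ev hz hn] with w hw using t2 w hw.1 hw.2
  refine ⟨t1 z hz hn, t2 z hz hn, t3 z hz hn, ?_⟩
  refine (hasDerivAt_Th_z 3 hτ z).unique ?_
  refine (((((hasDerivAt_Lam3 hz hn).mul (hasDerivAt_Th_z 0 hτ z)).add
    (((hasDerivAt_Lam2 hz hn).const_mul 2).mul (hasDerivAt_Th_z 1 hτ z))).add
    ((hasDerivAt_Lam1 hz hn).mul (hasDerivAt_Th_z 2 hτ z))).congr_of_eventuallyEq ?_).congr_deriv
    (by ring)
  filter_upwards [ev hz hn] with w hw using t3 w hw.1 hw.2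

lemma differentiable_Th (k : ℕ) {τ : ℂ} (hτ : 0 < τ.im) : Differentiable ℂ (Th k τ) :=
  fun z => (hasDerivAt_Th_z k hτ z).differentiableAt

/-- `lam_ode` with denominators cleared, so that it is an identity of entire functions. -/
theorem Th_ode {τ z₀ : ℂ} (hτ : 0 < τ.im) (hz₀ : Th 0 τ z₀ ≠ 0) (z : ℂ) :
    (Eis2 τ * Th 0 τ z ^ 2 + 3 / π ^ 2 * (Th 0 τ z * Th 2 τ z - Th 1 τ z ^ 2)) ^ 2
      + 3 / (2 * π ^ 4) * (Th 0 τ z ^ 3 * Th 4 τ z - 4 * Th 0 τ z ^ 2 * Th 1 τ z * Th 3 τ z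
        - 3 * Th 0 τ z ^ 2 * Th 2 τ z ^ 2 + 12 * Th 0 τ z * Th 1 τ z ^ 2 * Th 2 τ z
        - 6 * Th 1 τ z ^ 4) - Eis4 τ * Th 0 τ z ^ 4 = 0 := by
  obtain ⟨C, hC0, hC⟩ := exists_factor_ne_zero hτ hz₀
  have d0 := differentiable_Th 0 hτ
  have d1 := differentiable_Th 1 hτ
  have d2 := differentiable_Th 2 hτ
  have d3 := differentiable_Th 3 hτ
  have d4 := differentiable_Th 4 hτ
  refine eq_zero_of_strip (f := fun z => (Eis2 τ * Th 0 τ z ^ 2 + 3 / π ^ 2 * (Th 0 τ z * Th 2 τ z - Th 1 τ z ^ 2)) ^ 2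
      + 3 / (2 * π ^ 4) * (Th 0 τ z ^ 3 * Th 4 τ z - 4 * Th 0 τ z ^ 2 * Th 1 τ z * Th 3 τ z
        - 3 * Th 0 τ z ^ 2 * Th 2 τ z ^ 2 + 12 * Th 0 τ z * Th 1 τ z ^ 2 * Th 2 τ z
        - 6 * Th 1 τ z ^ 4) - Eis4 τ * Th 0 τ z ^ 4) (by fun_prop) hτ (fun w hw hn => ?_) z
  obtain ⟨t1, t2, t3, t4⟩ := Th_strip hτ hC hw hn
  have h := lam_ode hw hn
  rw [t4, t3, t2, t1, ← h]
  ring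

/-- `exists_duplication` with denominators cleared, so that it is an identity of entire functions. -/
theorem Th_dup {τ z₀ : ℂ} (hτ : 0 < τ.im) (hz₀ : Th 0 τ z₀ ≠ 0) :
    ∃ κ : ℂ, ∀ z, Th 0 τ (2 * z) - κ * Th 0 τ z *
      (Th 0 τ z ^ 2 * Th 3 τ z - 3 * Th 0 τ z * Th 1 τ z * Th 2 τ z + 2 * Th 1 τ z ^ 3) = 0 := by
  obtain ⟨C, hC0, hC⟩ := exists_factor_ne_zero hτ hz₀
  obtain ⟨κ, hκ⟩ := exists_duplication hτ hC0 hC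
  have d0 := differentiable_Th 0 hτ
  have d1 := differentiable_Th 1 hτ
  have d2 := differentiable_Th 2 hτ
  have d3 := differentiable_Th 3 hτ
  refine ⟨κ, fun z => ?_⟩
  refine eq_zero_of_strip (f := fun z => Th 0 τ (2 * z) - κ * Th 0 τ z *
      (Th 0 τ z ^ 2 * Th 3 τ z - 3 * Th 0 τ z * Th 1 τ z * Th 2 τ z + 2 * Th 1 τ z ^ 3))
    (by fun_prop) hτ (fun w hw hn => ?_) z
  obtain ⟨t1, t2, t3, _⟩ := Th_strip hτ hC hw hn
  rw [hκ w hw hn, t3, t2, t1]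
  ring

/-! ### Ramanujan's formula for the derivative of `E₂` -/

/-- The odd Taylor coefficients of `ϑ` at `0` up to order five, from the Leibniz rule for
`C exp(-S₀(z)) · sin(πz)` and the values of `S₀''` and `S₀''''` at `0`. -/
lemma Th_odd_at_zero {τ C : ℂ} (hτ : 0 < τ.im)
    (hC : ∀ z : ℂ, |z.im| < τ.im → Th 0 τ z = C * (cexp (-Sk 0 τ z) * Complex.sin (π * z))) :
    Th 1 τ 0 = π * (C * cexp (-Sk 0 τ 0)) ∧ Th 3 τ 0 = -π ^ 2 * Eis2 τ * Th 1 τ 0 ∧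
    Th 5 τ 0 = π ^ 4 * (5 / 3 * Eis2 τ ^ 2 - 2 / 3 * Eis4 τ) * Th 1 τ 0 := by
  have h0s : |(0:ℂ).im| < τ.im := by simpa using hτ
  set s : ℂ → ℂ := fun w => Complex.sin (π * w) with hs
  set c : ℂ → ℂ := fun w => Complex.cos (π * w) with hc
  have ds : ∀ w, HasDerivAt s (π * c w) w := hasDerivAt_sin_pi
  have dc : ∀ w, HasDerivAt c (-(π * s w)) w := hasDerivAt_cos_pi
  set e0 : ℂ → ℂ := fun w => C * cexp (-Sk 0 τ w) with he0
  set e1 : ℂ → ℂ := fun w => -Sk 1 τ w * e0 w with he1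
  set e2 : ℂ → ℂ := fun w => (Sk 1 τ w ^ 2 - Sk 2 τ w) * e0 w with he2
  set e3 : ℂ → ℂ := fun w => (-Sk 1 τ w ^ 3 + 3 * (Sk 1 τ w * Sk 2 τ w) - Sk 3 τ w) * e0 w with he3
  set e4 : ℂ → ℂ := fun w => (Sk 1 τ w ^ 4 - 6 * (Sk 1 τ w ^ 2 * Sk 2 τ w) + 3 * Sk 2 τ w ^ 2
    + 4 * (Sk 1 τ w * Sk 3 τ w) - Sk 4 τ w) * e0 w with he4
  have d0 : ∀ w : ℂ, |w.im| < τ.im → HasDerivAt e0 (e1 w) w := fun w hw => by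
    refine ((hasDerivAt_Sk 0 hw).neg.cexp.const_mul C).congr_deriv ?_
    simp only [he1, he0, Pi.neg_apply]; ring
  have d1 : ∀ w : ℂ, |w.im| < τ.im → HasDerivAt e1 (e2 w) w := fun w hw => by
    refine ((hasDerivAt_Sk 1 hw).neg.mul (d0 w hw)).congr_deriv ?_
    simp only [he1, he2, Pi.neg_apply]; ring
  have d2 : ∀ w : ℂ, |w.im| < τ.im → HasDerivAt e2 (e3 w) w := fun w hw => by
    refine ((((hasDerivAt_Sk 1 hw).pow 2).sub (hasDerivAt_Sk 2 hw)).mul (d0 w hw)).congr_deriv ?_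
    simp only [he1, he3, Pi.sub_apply, Pi.pow_apply]; ring
  have d3 : ∀ w : ℂ, |w.im| < τ.im → HasDerivAt e3 (e4 w) w := fun w hw => by
    refine (((((hasDerivAt_Sk 1 hw).pow 3).neg.add (((hasDerivAt_Sk 1 hw).mul
      (hasDerivAt_Sk 2 hw)).const_mul 3)).sub (hasDerivAt_Sk 3 hw)).mul
      (d0 w hw)).congr_deriv ?_ |>.congr_of_eventuallyEq ?_
    · simp only [he1, he4, Pi.neg_apply, Pi.sub_apply, Pi.pow_apply, Pi.add_apply, Pi.mul_apply]
      ring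
    · refine .of_forall fun w => ?_
      simp only [he3, Pi.neg_apply, Pi.sub_apply, Pi.pow_apply, Pi.add_apply, Pi.mul_apply]
  have d4 : ∀ w : ℂ, |w.im| < τ.im → DifferentiableAt ℂ e4 w := fun w hw => by
    have a1 := (hasDerivAt_Sk 1 hw).differentiableAt
    have a2 := (hasDerivAt_Sk 2 hw).differentiableAt
    have a3 := (hasDerivAt_Sk 3 hw).differentiableAt
    have a4 := (hasDerivAt_Sk 4 hw).differentiableAt
    have a0 := (d0 w hw).differentiableAt
    simp only [he4]
    fun_prop
  have step : ∀ {k : ℕ} {F : ℂ → ℂ} {F' : ℂ → ℂ},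
      (∀ w : ℂ, |w.im| < τ.im → Th k τ w = F w) →
      (∀ w : ℂ, |w.im| < τ.im → HasDerivAt F (F' w) w) →
      ∀ w : ℂ, |w.im| < τ.im → Th (k + 1) τ w = F' w := by
    intro k F F' h hd w hw
    refine (hasDerivAt_Th_z k hτ w).unique ((hd w hw).congr_of_eventuallyEq ?_)
    filter_upwards [eventually_strip hw] with v hv using h v hv
  have t0 : ∀ w : ℂ, |w.im| < τ.im → Th 0 τ w = e0 w * s w := fun w hw => by
    rw [hC w hw]; simp only [he0, hs]; ring
  have t1 := step t0 (F' := fun w => e1 w * s w + π * (e0 w * c w)) fun w hw =>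
    ((d0 w hw).mul (ds w)).congr_deriv (by ring)
  have t2 := step t1 (F' := fun w => e2 w * s w + 2 * π * (e1 w * c w) - π ^ 2 * (e0 w * s w))
    fun w hw => (((d1 w hw).mul (ds w)).add
      (((d0 w hw).mul (dc w)).const_mul (π : ℂ))).congr_deriv (by ring)
  have t3 := step t2 (F' := fun w => e3 w * s w + 3 * π * (e2 w * c w) - 3 * π ^ 2 * (e1 w * s w)
      - π ^ 3 * (e0 w * c w))
    fun w hw => ((((d2 w hw).mul (ds w)).add
      (((d1 w hw).mul (dc w)).const_mul (2 * π : ℂ))).sub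
      (((d0 w hw).mul (ds w)).const_mul (π ^ 2 : ℂ))).congr_deriv (by ring)
  have t4 := step t3 (F' := fun w => e4 w * s w + 4 * π * (e3 w * c w) - 6 * π ^ 2 * (e2 w * s w)
      - 4 * π ^ 3 * (e1 w * c w) + π ^ 4 * (e0 w * s w))
    fun w hw => (((((d3 w hw).mul (ds w)).add
      (((d2 w hw).mul (dc w)).const_mul (3 * π : ℂ))).sub
      (((d1 w hw).mul (ds w)).const_mul (3 * π ^ 2 : ℂ))).sub
      (((d0 w hw).mul (dc w)).const_mul (π ^ 3 : ℂ))).congr_deriv (by ring)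
  have t5 := step t4 (F' := fun w => deriv e4 w * s w + 5 * π * (e4 w * c w)
      - 10 * π ^ 2 * (e3 w * s w) - 10 * π ^ 3 * (e2 w * c w) + 5 * π ^ 4 * (e1 w * s w)
      + π ^ 5 * (e0 w * c w))
    fun w hw => ((((((d4 w hw).hasDerivAt.mul (ds w)).add
      (((d3 w hw).mul (dc w)).const_mul (4 * π : ℂ))).sub
      (((d2 w hw).mul (ds w)).const_mul (6 * π ^ 2 : ℂ))).sub
      (((d1 w hw).mul (dc w)).const_mul (4 * π ^ 3 : ℂ))).add
      (((d0 w hw).mul (ds w)).const_mul (π ^ 4 : ℂ))).congr_deriv (by ring)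
  have s0 : s 0 = 0 := by simp [hs]
  have c0 : c 0 = 1 := by simp [hc]
  have S1 : Sk 1 τ 0 = 0 := Sk_zero_odd (by decide) τ
  have S3 : Sk 3 τ 0 = 0 := Sk_zero_odd (by decide) τ
  have T1 := t1 0 h0s
  have T3 := t3 0 h0s
  have T5 := t5 0 h0s
  simp only [he1, he2, he3, he4, s0, c0, S1, S3, Sk_two_zero hτ, Sk_four_zero hτ] at T1 T3 T5
  refine ⟨by rw [T1]; ring, ?_, ?_⟩
  · rw [T3, T1]; ring
  · rw [T5, T1]; ring

/-- Ramanujan's formula. Near `τ` one has `E₂ = -ϑ'''(0) / (π² ϑ'(0))`; by the heat equation the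
`τ`-derivative of the right side involves only the first, third and fifth `z`-derivatives of `ϑ` at
`0`. -/
theorem hasDerivAt_Eis2 {τ z₀ : ℂ} (hτ : 0 < τ.im) (hz₀ : Th 0 τ z₀ ≠ 0) :
    HasDerivAt Eis2 (π * I / 6 * (Eis2 τ ^ 2 - Eis4 τ)) τ := by
  obtain ⟨C, hC0, hC⟩ := exists_factor_ne_zero hτ hz₀
  obtain ⟨h1, h3, h5⟩ := Th_odd_at_zero hτ hC
  have hpi := pi_ne
  have hI := Complex.I_ne_zero
  have h1ne : Th 1 τ 0 ≠ 0 := by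
    rw [h1]; exact mul_ne_zero hpi (mul_ne_zero hC0 (Complex.exp_ne_zero _))
  have d1 := hasDerivAt_Th_tau 1 hτ 0
  have d3 := hasDerivAt_Th_tau 3 hτ 0
  have hev : Eis2 =ᶠ[𝓝 τ] fun t => -Th 3 t 0 / (π ^ 2 * Th 1 t 0) := by
    have ho : IsOpen {t : ℂ | 0 < t.im} := isOpen_lt continuous_const Complex.continuous_im
    filter_upwards [ho.mem_nhds hτ, d1.continuousAt.eventually_ne h1ne] with t ht hne
    obtain ⟨D, hD⟩ := exists_factor ht
    rw [(Th_odd_at_zero ht hD).2.1]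
    field_simp
  refine ((d3.neg.div (d1.const_mul (π ^ 2 : ℂ))
    (mul_ne_zero (pow_ne_zero 2 hpi) h1ne)).congr_of_eventuallyEq hev).congr_deriv ?_
  simp only [Nat.reduceAdd, Pi.neg_apply]
  rw [h5, h3]
  field_simp
  linear_combination (-12 * (Eis2 τ ^ 2 - Eis4 τ)) * Complex.I_sq

/-! ### Logarithmic derivatives on the plane and the two heat identities -/

/-- The logarithmic derivative `L₁ = ϑ'/ϑ` on the whole plane (junk at zeros of `ϑ`). -/
def lg1 (τ z : ℂ) : ℂ := Th 1 τ z / Th 0 τ z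

/-- `L₂ = (log ϑ)''`, where `ϑ ≠ 0`. -/
def lg2 (τ z : ℂ) : ℂ := Th 2 τ z / Th 0 τ z - lg1 τ z ^ 2

/-- `L₃ = (log ϑ)'''`, where `ϑ ≠ 0`. -/
def lg3 (τ z : ℂ) : ℂ := Th 3 τ z / Th 0 τ z - 3 * (lg1 τ z * lg2 τ z) - lg1 τ z ^ 3

/-- The fourth derivative `L₄` of `log ϑ`, where `ϑ ≠ 0`. -/
def lg4 (τ z : ℂ) : ℂ :=
  Th 4 τ z / Th 0 τ z - 4 * (lg1 τ z * lg3 τ z) - 3 * lg2 τ z ^ 2 - 6 * (lg1 τ z ^ 2 * lg2 τ z)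
    - lg1 τ z ^ 4

lemma hasDerivAt_Th_div (k : ℕ) {τ z : ℂ} (hτ : 0 < τ.im) (h0 : Th 0 τ z ≠ 0) :
    HasDerivAt (fun w => Th k τ w / Th 0 τ w)
      (Th (k + 1) τ z / Th 0 τ z - Th k τ z / Th 0 τ z * lg1 τ z) z := by
  refine ((hasDerivAt_Th_z k hτ z).div (hasDerivAt_Th_z 0 hτ z) h0).congr_deriv ?_
  unfold lg1
  field_simp

lemma hasDerivAt_lg1 {τ z : ℂ} (hτ : 0 < τ.im) (h0 : Th 0 τ z ≠ 0) :
    HasDerivAt (lg1 τ) (lg2 τ z) z := by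
  refine (hasDerivAt_Th_div 1 hτ h0).congr_deriv ?_
  unfold lg2 lg1; ring

lemma hasDerivAt_lg2 {τ z : ℂ} (hτ : 0 < τ.im) (h0 : Th 0 τ z ≠ 0) :
    HasDerivAt (lg2 τ) (lg3 τ z) z := by
  refine ((hasDerivAt_Th_div 2 hτ h0).sub ((hasDerivAt_lg1 hτ h0).pow 2)).congr_deriv ?_
  unfold lg3 lg2; simp only [Nat.reduceAdd]; ring

lemma hasDerivAt_lg3 {τ z : ℂ} (hτ : 0 < τ.im) (h0 : Th 0 τ z ≠ 0) :
    HasDerivAt (lg3 τ) (lg4 τ z) z := by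
  refine (((hasDerivAt_Th_div 3 hτ h0).sub (((hasDerivAt_lg1 hτ h0).mul
    (hasDerivAt_lg2 hτ h0)).const_mul 3)).sub ((hasDerivAt_lg1 hτ h0).pow 3)).congr_deriv ?_
  unfold lg4 lg3 lg2; simp only [Nat.reduceAdd]; ring

lemma lg_ode {τ z : ℂ} (hτ : 0 < τ.im) (h0 : Th 0 τ z ≠ 0) :
    (Eis2 τ + 3 / π ^ 2 * lg2 τ z) ^ 2 + 3 / (2 * π ^ 4) * lg4 τ z = Eis4 τ := by
  have h := Th_ode hτ h0 z
  apply mul_right_cancel₀ (pow_ne_zero 4 h0)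
  rw [← sub_eq_zero, ← h]
  unfold lg4 lg3 lg2 lg1
  have := pi_ne
  field_simp
  ring

lemma eventually_Th_ne {τ z : ℂ} (hτ : 0 < τ.im) (h0 : Th 0 τ z ≠ 0) :
    ∀ᶠ w in 𝓝 z, Th 0 τ w ≠ 0 :=
  (hasDerivAt_Th_z 0 hτ z).continuousAt.eventually_ne h0

/-- The derivative of `L₄` is expressed in `L₂` and `L₃` by differentiating `lg_ode`. -/
lemma hasDerivAt_lg4 {τ z : ℂ} (hτ : 0 < τ.im) (h0 : Th 0 τ z ≠ 0) :
    HasDerivAt (lg4 τ) (-4 * π ^ 2 * (Eis2 τ + 3 / π ^ 2 * lg2 τ z) * lg3 τ z) z := by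
  have hpi := pi_ne
  have h := (((((hasDerivAt_lg2 hτ h0).const_mul (3 / π ^ 2 : ℂ)).const_add (Eis2 τ)).pow 2).const_sub
    (Eis4 τ)).const_mul (2 * π ^ 4 / 3 : ℂ)
  refine (h.congr_of_eventuallyEq ?_).congr_deriv ?_
  · filter_upwards [eventually_Th_ne hτ h0] with w hw
    have := lg_ode hτ hw
    simp only [Pi.pow_apply]
    rw [← this]
    field_simp
    ring
  · simp only [Nat.cast_ofNat, Nat.add_one_sub_one, pow_one]
    field_simp
    ring

lemma hasDerivAt_Th_two_mul (k : ℕ) {τ : ℂ} (hτ : 0 < τ.im) (z : ℂ) :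
    HasDerivAt (fun w => Th k τ (2 * w)) (2 * Th (k + 1) τ (2 * z)) z := by
  have h2 : HasDerivAt (fun w : ℂ => 2 * w) 2 z := by simpa using (hasDerivAt_id z).const_mul (2:ℂ)
  exact ((hasDerivAt_Th_z k hτ (2 * z)).comp z h2).congr_deriv (by ring)

/-- The duplication formula and its first two derivatives, written in the `L_j`. -/
lemma dup_derivs {τ z : ℂ} (hτ : 0 < τ.im) (h0 : Th 0 τ z ≠ 0) :
    ∃ κ : ℂ, Th 0 τ (2 * z) = κ * lg3 τ z * Th 0 τ z ^ 4 ∧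
      2 * Th 1 τ (2 * z) = κ * (lg4 τ z + 4 * lg1 τ z * lg3 τ z) * Th 0 τ z ^ 4 ∧
      4 * Th 2 τ (2 * z) = κ * (-4 * π ^ 2 * (Eis2 τ + 3 / π ^ 2 * lg2 τ z) * lg3 τ z
        + 4 * lg2 τ z * lg3 τ z + 8 * lg1 τ z * lg4 τ z + 16 * lg1 τ z ^ 2 * lg3 τ z)
        * Th 0 τ z ^ 4 := by
  obtain ⟨κ, hκ⟩ := Th_dup hτ h0
  have hd : ∀ w, Th 0 τ w ≠ 0 → HasDerivAt (fun w => Th 0 τ w ^ 4) (4 * lg1 τ w * Th 0 τ w ^ 4) w := by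
    intro w hw
    refine ((hasDerivAt_Th_z 0 hτ w).pow 4).congr_deriv ?_
    unfold lg1; field_simp; norm_num; ring
  have t0 : ∀ w, Th 0 τ w ≠ 0 → Th 0 τ (2 * w) = κ * lg3 τ w * Th 0 τ w ^ 4 := by
    intro w hw
    rw [sub_eq_zero.1 (hκ w)]
    unfold lg3 lg2 lg1
    field_simp
    ring
  have t1 : ∀ w, Th 0 τ w ≠ 0 → 2 * Th 1 τ (2 * w) =
      κ * (lg4 τ w + 4 * lg1 τ w * lg3 τ w) * Th 0 τ w ^ 4 := by
    intro w hw
    refine (hasDerivAt_Th_two_mul 0 hτ w).unique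
      (((((hasDerivAt_lg3 hτ hw).const_mul κ).mul (hd w hw)).congr_of_eventuallyEq ?_).congr_deriv
        (by ring))
    filter_upwards [eventually_Th_ne hτ hw] with v hv using t0 v hv
  refine ⟨κ, t0 z h0, t1 z h0, ?_⟩
  have h1 := ((((hasDerivAt_lg4 hτ h0).add (((hasDerivAt_lg1 hτ h0).const_mul 4).mul
    (hasDerivAt_lg3 hτ h0))).const_mul κ).mul (hd z h0))
  have h2 := (hasDerivAt_Th_two_mul 1 hτ z).const_mul 2
  rw [show 4 * Th 2 τ (2 * z) = 2 * (2 * Th (1 + 1) τ (2 * z)) by ring_nf]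
  refine h2.unique ((h1.congr_of_eventuallyEq ?_).congr_deriv ?_)
  · filter_upwards [eventually_Th_ne hτ h0] with v hv using t1 v hv
  · simp only [Pi.add_apply, Pi.mul_apply]
    ring

/-- The heat equation for `L₂`. -/
lemma hasDerivAt_lg2_tau {τ z : ℂ} (hτ : 0 < τ.im) (h0 : Th 0 τ z ≠ 0) :
    HasDerivAt (fun t => lg2 t z)
      ((lg4 τ z + 2 * lg1 τ z * lg3 τ z + 2 * lg2 τ z ^ 2) / (4 * π * I)) τ := by
  have d0 := hasDerivAt_Th_tau 0 hτ z
  have d1 := hasDerivAt_Th_tau 1 hτ z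
  have d2 := hasDerivAt_Th_tau 2 hτ z
  have hpi := pi_ne
  have hI := Complex.I_ne_zero
  refine ((d2.div d0 h0).sub ((d1.div d0 h0).pow 2)).congr_deriv ?_
  unfold lg4 lg3 lg2 lg1
  simp only [Nat.reduceAdd, Pi.div_apply, Nat.cast_ofNat, Nat.add_one_sub_one, pow_one]
  field_simp
  ring

lemma deriv_thetaJ {τ : ℂ} (hτ : 0 < τ.im) : deriv (thetaJ τ) = Th 1 τ := by
  have : thetaJ τ = Th 0 τ := funext (thetaJ_eq_Th τ)
  rw [this]
  exact funext fun z => (hasDerivAt_Th_z 0 hτ z).deriv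

lemma deriv2_thetaJ {τ : ℂ} (hτ : 0 < τ.im) : deriv (deriv (thetaJ τ)) = Th 2 τ := by
  rw [deriv_thetaJ hτ]
  exact funext fun z => (hasDerivAt_Th_z 1 hτ z).deriv

lemma phi01_eq {τ z : ℂ} (hτ : 0 < τ.im) (h0 : Th 0 τ z ≠ 0) :
    phi01 τ z = Th 0 τ z ^ 2 * (Eis2 τ + 3 / π ^ 2 * lg2 τ z) / etaD τ ^ 6 := by
  unfold phi01
  rw [deriv2_thetaJ hτ, deriv_thetaJ hτ, thetaJ_eq_Th]
  unfold lg2 lg1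
  have := pi_ne
  have := etaD_ne_zero hτ
  field_simp
  ring

lemma phi052_eq {τ z : ℂ} (hτ : 0 < τ.im) (h0 : Th 0 τ z ≠ 0) :
    phi052 τ z = Th 0 τ (2 * z) * Th 0 τ z * (Eis2 τ + 3 / π ^ 2 * lg2 τ z) / etaD τ ^ 6 := by
  unfold phi052 phi032
  rw [phi01_eq hτ h0, thetaJ_eq_Th, thetaJ_eq_Th]
  field_simp

lemma phim21_mul_phi032_eq (τ z : ℂ) :
    phim21 τ z * phi032 τ z = Th 0 τ (2 * z) * Th 0 τ z / etaD τ ^ 6 := by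
  unfold phim21 phi032
  rw [thetaJ_eq_Th, thetaJ_eq_Th]
  by_cases h : Th 0 τ z = 0
  · simp [h]
  · field_simp

/-- `H^{(5/2)}_{0}(φ_{0,5/2}) = −(11/5)·E₄·φ_{−2,1}·φ_{0,3/2}` and
`H^{(5/2)}_{−2}(φ_{−2,1}·φ_{0,3/2}) = −(1/5)·φ_{0,1}·φ_{0,3/2}` where `ϑ(τ,z) ≠ 0`. -/
theorem statement8 (τ z : ℂ) (hτ : 0 < τ.im) (hθ : thetaJ τ z ≠ 0) :
    heatMod (5/2) 0 phi052 τ z = -(11/5) * Eis4 τ * phim21 τ z * phi032 τ z ∧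
    heatMod (5/2) (-2) (fun t w => phim21 t w * phi032 t w) τ z
      = -(1/5) * phi01 τ z * phi032 τ z := by
  have h0 : Th 0 τ z ≠ 0 := by rwa [← thetaJ_eq_Th]
  have hpi := pi_ne
  have hI := Complex.I_ne_zero
  have hη := etaD_ne_zero hτ
  have hH : ∀ᶠ t in 𝓝 τ, 0 < t.im :=
    (isOpen_lt continuous_const Complex.continuous_im).mem_nhds hτ
  have a1 : Th 1 τ z = lg1 τ z * Th 0 τ z := by unfold lg1; field_simp
  have a2 : Th 2 τ z = (lg2 τ z + lg1 τ z ^ 2) * Th 0 τ z := by unfold lg2; field_simp; ring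
  obtain ⟨κ, b0, b1, b2⟩ := dup_derivs hτ h0
  have b1' : Th 1 τ (2 * z) = κ * (lg4 τ z + 4 * lg1 τ z * lg3 τ z) * Th 0 τ z ^ 4 / 2 := by
    rw [← b1]; ring
  have b2' : Th 2 τ (2 * z) = κ * (-4 * π ^ 2 * (Eis2 τ + 3 / π ^ 2 * lg2 τ z) * lg3 τ z
        + 4 * lg2 τ z * lg3 τ z + 8 * lg1 τ z * lg4 τ z + 16 * lg1 τ z ^ 2 * lg3 τ z)
        * Th 0 τ z ^ 4 / 4 := by
    rw [← b2]; ring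
  have hode := lg_ode hτ h0
  have dz : ∀ w, HasDerivAt (fun w => Th 0 τ (2 * w) * Th 0 τ w)
      (2 * Th 1 τ (2 * w) * Th 0 τ w + Th 0 τ (2 * w) * Th 1 τ w) w := fun w =>
    (hasDerivAt_Th_two_mul 0 hτ w).mul (hasDerivAt_Th_z 0 hτ w)
  have dzz : ∀ w, HasDerivAt (fun w => 2 * Th 1 τ (2 * w) * Th 0 τ w + Th 0 τ (2 * w) * Th 1 τ w)
      (4 * Th 2 τ (2 * w) * Th 0 τ w + 4 * Th 1 τ (2 * w) * Th 1 τ w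
        + Th 0 τ (2 * w) * Th 2 τ w) w := fun w =>
    ((((hasDerivAt_Th_two_mul 1 hτ w).const_mul 2).mul (hasDerivAt_Th_z 0 hτ w)).add
      ((hasDerivAt_Th_two_mul 0 hτ w).mul (hasDerivAt_Th_z 1 hτ w))).congr_deriv
      (by simp only [Nat.reduceAdd]; ring)
  have dt : HasDerivAt (fun t => Th 0 t (2 * z) * Th 0 t z)
      (Th 2 τ (2 * z) / (4 * π * I) * Th 0 τ z + Th 0 τ (2 * z) * (Th 2 τ z / (4 * π * I))) τ :=
    (hasDerivAt_Th_tau 0 hτ (2 * z)).mul (hasDerivAt_Th_tau 0 hτ z)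
  have dη := (hasDerivAt_etaD hτ).pow 6
  constructor
  · have Dt := ((dt.mul ((hasDerivAt_Eis2 hτ h0).add ((hasDerivAt_lg2_tau hτ h0).const_mul
      (3 / π ^ 2 : ℂ)))).div dη (pow_ne_zero 6 hη)).congr_of_eventuallyEq
      (f₁ := fun t => phi052 t z) (by
        filter_upwards [hH, (hasDerivAt_Th_tau 0 hτ z).continuousAt.eventually_ne h0] with t ht hne
        exact phi052_eq ht hne)
    have D1 : ∀ w, Th 0 τ w ≠ 0 → HasDerivAt (phi052 τ) _ w := fun w hw =>
      (((dz w).mul (((hasDerivAt_lg2 hτ hw).const_mul (3 / π ^ 2 : ℂ)).const_add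
        (Eis2 τ))).div_const (etaD τ ^ 6)).congr_of_eventuallyEq (by
        filter_upwards [eventually_Th_ne hτ hw] with v hv
        exact phi052_eq hτ hv)
    have D2 := ((((dzz z).mul (((hasDerivAt_lg2 hτ h0).const_mul (3 / π ^ 2 : ℂ)).const_add
        (Eis2 τ))).add ((dz z).mul ((hasDerivAt_lg3 hτ h0).const_mul
        (3 / π ^ 2 : ℂ)))).div_const (etaD τ ^ 6)).congr_of_eventuallyEq
      (f₁ := deriv (phi052 τ)) (by
        filter_upwards [eventually_Th_ne hτ h0] with v hv
        exact (D1 v hv).deriv)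
    unfold heatMod heatOp
    rw [Dt.deriv, D2.deriv, phi052_eq hτ h0, mul_assoc _ (phim21 τ z), phim21_mul_phi032_eq]
    simp only [Pi.mul_apply, Pi.add_apply, Pi.pow_apply]
    rw [a1, a2, b0, b1', b2', ← hode]
    simp only [Nat.cast_ofNat, Nat.reduceSub]
    push_cast
    field_simp
    ring_nf
    simp only [Complex.I_sq]
    ring
  · have Dt := (dt.div dη (pow_ne_zero 6 hη)).congr_of_eventuallyEq
      (f₁ := fun t => phim21 t z * phi032 t z) (.of_forall fun t => phim21_mul_phi032_eq t z)
    have D1 : ∀ w, HasDerivAt (fun w => phim21 τ w * phi032 τ w) _ w := fun w =>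
      ((dz w).div_const (etaD τ ^ 6)).congr_of_eventuallyEq
        (.of_forall fun t => phim21_mul_phi032_eq τ t)
    have D2 := ((dzz z).div_const (etaD τ ^ 6)).congr_of_eventuallyEq
      (f₁ := deriv (fun w => phim21 τ w * phi032 τ w)) (.of_forall fun w => (D1 w).deriv)
    unfold heatMod heatOp
    rw [Dt.deriv, D2.deriv]
    beta_reduce
    rw [phim21_mul_phi032_eq, mul_assoc _ (phi01 τ z), mul_comm (phi01 τ z)]
    have e : phi032 τ z * phi01 τ z = phi052 τ z := rfl
    rw [e, phi052_eq hτ h0]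
    simp only [Pi.pow_apply]
    rw [a1, a2, b0, b1', b2']
    simp only [Nat.cast_ofNat, Nat.reduceSub]
    push_cast
    field_simp
    ring_nf
    simp only [Complex.I_sq]
    ring
end
end

section
/- Kaneko–Zagier type equation for the square of the Jacobi theta series: with all heat operators taken with index m = 1, the function ϑ(τ,z)² satisfies H^{(1)}_{3}(H^{(1)}_{1}(ϑ²))(τ,z) − (5/4)·E₄(τ)·ϑ(τ,z)² = 0 for all (τ,z) ∈ ℍ × ℂ. Equivalently, H^{(1)}_{0}(H^{(1)}_{−2}(φ_{−2,1}))(τ,z) − (5/4)·E₄(τ)·φ_{−2,1}(τ,z) = 0, where φ_{−2,1} = ϑ²/η⁶. -/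
/-!
The square of the theta series is governed by two one-variable functions. Writing
`ϑ(τ,z) = ∑ χ₄(n) q^{n²/8} ζ^{n/2}` and substituting `u = s + d`, `v = s - d` in the double series
for `ϑ²` gives the theta decomposition (`thetaJ_sq`)
`ϑ(τ,z)² = e₀(τ) Θ_odd(2τ,2z) - o₀(τ) Θ_even(2τ,2z)`.
The heat operator of index one annihilates `Θ_odd(2τ,2z)` and `Θ_even(2τ,2z)`, so the claim is a
second order differential equation, the same one for `e₀` and `o₀` (`heatMod_decomp`).

Throughout, `a_k = ∑ χ₄(n) n^k q^{n²/8}`, and `e_k`, `o_k` are the sums of `n^k q^{n²/4}` over even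
and odd `n`; with `D = q d/dq` one has `D a_k = a_{k+2}/8`, `D e_k = e_{k+2}/4`,
`D o_k = o_{k+2}/4`. The same substitution expresses the Wronskian `o₂ e₀ - o₀ e₂` and the
determinants `o₄ e₀ - o₀ e₄`, `o₄ e₂ - o₂ e₄` in terms of `a₁`, `a₃`, `a₅` (`wronskian_zero`,
`wronskian_one`, `wronskian_two`). These are the coefficients of the second order equation
satisfied by `e₀` and `o₀`, which becomes explicit once `a₃/a₁` and `a₅/a₁` are known.

The transformation law of the Jacobi theta function shows that `a₁⁸` is a cusp form of weight `12`
and level one, hence a nonzero multiple of `η²⁴`. So `a₁` has no zeros, and its logarithmic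
derivative is that of `η³`, that is, `a₃ = E₂ a₁` (`thetaW_chi_three`). Differentiating,
`a₅ = (8 D E₂ + E₂²) a₁`, and elimination gives `e₄ = E₂ e₂ - (D E₂) e₀` and likewise for `o`
(`thetaW_even_ode`, `thetaW_odd_ode`). Ramanujan's identity `12 D E₂ = E₂² - E₄` (`ramF_eq`), proved
from the one-dimensionality of the space of modular forms of weight `4`, turns this into the
asserted equation. The version for `φ_{-2,1} = ϑ²/η⁶` follows from `D η = E₂ η / 24`: the factor
`η⁻⁶` shifts the weights in the modular heat operators by `-3` (`heatMod_heatMod`).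
-/

open Complex Real

noncomputable section

/-! ### Weighted theta series -/

/-- The monomial `e^{πi n² τ/4 + πi n z} = q^{n²/8} ζ^{n/2}`. -/
def eTerm (n : ℤ) (τ z : ℂ) : ℂ := Complex.exp (π * I * n ^ 2 * τ / 4 + π * I * n * z)

/-- The weighted theta series `∑ c(n) n^k q^{n²/8} ζ^{n/2}` over `n ∈ ℤ`. In the notation of the
other comments, `a_k`, `e_k`, `o_k` are `thetaW chi k τ 0`, `thetaW evenI k (2 * τ) 0` and
`thetaW oddI k (2 * τ) 0`. -/
def thetaW (c : ℤ → ℂ) (k : ℕ) (τ z : ℂ) : ℂ := ∑' n : ℤ, c n * n ^ k * eTerm n τ z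

lemma eTerm_eq (n : ℤ) (τ z : ℂ) : eTerm n τ z = jacobiTheta₂_term n (z / 2) (τ / 4) := by
  unfold eTerm jacobiTheta₂_term
  congr 1
  ring

lemma norm_thetaW_term_le {c : ℤ → ℂ} (hc : ∀ n, ‖c n‖ ≤ 1) (k : ℕ) {S T : ℝ} (hT : 0 < T)
    {τ z : ℂ} (hz : |z.im| ≤ S) (hτ : T ≤ τ.im) (n : ℤ) :
    ‖c n * n ^ k * eTerm n τ z‖ ≤
      (|n| ^ k : ℝ) * Real.exp (-π * (T / 4 * n ^ 2 - 2 * (S / 2) * |n|)) := by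
  rw [norm_mul, norm_mul, eTerm_eq, norm_pow, Complex.norm_intCast]
  have h1 : |(z / 2).im| ≤ S / 2 := by
    simp only [Complex.div_ofNat_im, abs_div]
    norm_num
    linarith
  have h2 : T / 4 ≤ (τ / 4).im := by
    simp only [Complex.div_ofNat_im]
    linarith
  have h3 := norm_jacobiTheta₂_term_le (by positivity) h1 h2 n
  have h4 : ‖c n‖ * |(n : ℝ)| ^ k ≤ |(n : ℝ)| ^ k :=
    mul_le_of_le_one_left (by positivity) (hc n)
  exact mul_le_mul (by exact_mod_cast h4) (by exact_mod_cast h3) (norm_nonneg _) (by positivity)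

lemma summable_norm_thetaW {c : ℤ → ℂ} (hc : ∀ n, ‖c n‖ ≤ 1) (k : ℕ) {τ : ℂ} (hτ : 0 < τ.im)
    (z : ℂ) : Summable fun n : ℤ => ‖c n * n ^ k * eTerm n τ z‖ :=
  (summable_pow_mul_jacobiTheta₂_term_bound (|z.im| / 2) (T := τ.im / 4) (by positivity)
    k).of_nonneg_of_le (fun _ => norm_nonneg _)
    fun n => by simpa using norm_thetaW_term_le hc k hτ le_rfl le_rfl n

lemma hasSum_thetaW {c : ℤ → ℂ} (hc : ∀ n, ‖c n‖ ≤ 1) (k : ℕ) {τ : ℂ} (hτ : 0 < τ.im)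
    (z : ℂ) : HasSum (fun n : ℤ => c n * n ^ k * eTerm n τ z) (thetaW c k τ z) :=
  (summable_norm_thetaW hc k hτ z).of_norm.hasSum

lemma hasDerivAt_thetaW_z {c : ℤ → ℂ} (hc : ∀ n, ‖c n‖ ≤ 1) (k : ℕ) {τ : ℂ} (hτ : 0 < τ.im)
    (z : ℂ) : HasDerivAt (thetaW c k τ) (π * I * thetaW c (k + 1) τ z) z := by
  have key := hasDerivAt_tsum_of_isPreconnected (𝕜 := ℂ)
    (g := fun (n : ℤ) w => c n * n ^ k * eTerm n τ w)
    (g' := fun (n : ℤ) w => π * I * (c n * n ^ (k + 1) * eTerm n τ w))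
    (t := {w : ℂ | |w.im| < |z.im| + 1}) (y₀ := z) (y := z)
    ((summable_pow_mul_jacobiTheta₂_term_bound ((|z.im| + 1) / 2) (T := τ.im / 4)
      (by positivity) (k + 1)).mul_left π)
    ((_root_.continuous_abs.comp continuous_im).isOpen_preimage _ isOpen_Iio)
    (by
      have : {w : ℂ | |w.im| < |z.im| + 1} = Complex.imLm ⁻¹' (Set.Ioo (-(|z.im| + 1)) (|z.im| + 1)) := by
        ext w
        simp [abs_lt]
      rw [this]
      exact ((convex_Ioo _ _).linear_preimage _).isPreconnected)
    (fun n w _ => by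
      have : HasDerivAt (fun w : ℂ => π * I * n ^ 2 * τ / 4 + π * I * n * w) (π * I * n) w := by
        simpa using ((hasDerivAt_id w).const_mul (π * I * n : ℂ)).const_add (π * I * n ^ 2 * τ / 4)
      convert! this.cexp.const_mul (c n * n ^ k : ℂ) using 1
      simp only [eTerm]
      ring)
    (fun n w hw => by
      rw [norm_mul]
      refine mul_le_mul (by simp [abs_of_pos pi_pos]) ?_ (norm_nonneg _) pi_pos.le
      simpa using norm_thetaW_term_le hc (k + 1) hτ (le_of_lt hw) le_rfl n)
    (by simp) (hasSum_thetaW hc k hτ z).summable (by simp)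
  rw [tsum_mul_left] at key
  exact key

/-- Termwise differentiation in `τ`; together with `hasDerivAt_thetaW_z` this is the
heat equation for the weighted theta series. -/
lemma hasDerivAt_thetaW_tau {c : ℤ → ℂ} (hc : ∀ n, ‖c n‖ ≤ 1) (k : ℕ) {τ : ℂ} (hτ : 0 < τ.im)
    (z : ℂ) :
    HasDerivAt (fun t => thetaW c k t z) (π * I / 4 * thetaW c (k + 2) τ z) τ := by
  have key := hasDerivAt_tsum_of_isPreconnected (𝕜 := ℂ)
    (g := fun (n : ℤ) t => c n * n ^ k * eTerm n t z)
    (g' := fun (n : ℤ) t => π * I / 4 * (c n * n ^ (k + 2) * eTerm n t z))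
    (t := {t : ℂ | τ.im / 2 < t.im}) (y₀ := τ) (y := τ)
    ((summable_pow_mul_jacobiTheta₂_term_bound (|z.im| / 2) (T := τ.im / 2 / 4)
      (by positivity) (k + 2)).mul_left π)
    (continuous_im.isOpen_preimage _ isOpen_Ioi)
    ((convex_halfSpace_im_gt _).isPreconnected)
    (fun n t _ => by
      have : HasDerivAt (fun t : ℂ => π * I * n ^ 2 * t / 4 + π * I * n * z)
          (π * I * n ^ 2 / 4) t := by
        simpa using (((hasDerivAt_id t).const_mul (π * I * n ^ 2 : ℂ)).div_const 4).add_const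
          (π * I * n * z)
      convert! this.cexp.const_mul (c n * n ^ k : ℂ) using 1
      simp only [eTerm]
      ring)
    (fun n t ht => by
      rw [norm_mul]
      refine mul_le_mul ?_ ?_ (norm_nonneg _) pi_pos.le
      · simp [abs_of_pos pi_pos]
        linarith [pi_pos]
      simpa using norm_thetaW_term_le hc (k + 2) (by positivity) le_rfl (le_of_lt ht) n)
    (by simp; positivity) (hasSum_thetaW hc k hτ z).summable (by simp; positivity)
  rw [tsum_mul_left] at key
  exact key

lemma hasSum_thetaW_mul {c d : ℤ → ℂ} (hc : ∀ n, ‖c n‖ ≤ 1) (hd : ∀ n, ‖d n‖ ≤ 1) (k l : ℕ)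
    {τ : ℂ} (hτ : 0 < τ.im) (y z : ℂ) :
    HasSum (fun p : ℤ × ℤ => (c p.1 * p.1 ^ k * eTerm p.1 τ y) * (d p.2 * p.2 ^ l * eTerm p.2 τ z))
      (thetaW c k τ y * thetaW d l τ z) := by
  have h := (summable_mul_of_summable_norm (summable_norm_thetaW hc k hτ y)
    (summable_norm_thetaW hd l hτ z)).hasSum
  rwa [← tsum_mul_tsum_of_summable_norm (summable_norm_thetaW hc k hτ y)
    (summable_norm_thetaW hd l hτ z)] at h

/-! ### Products of theta series -/

/-- The change of lattice `(s, d) ↦ (s + d, s - d)` is injective; its image consists of the pairs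
of integers of equal parity. -/
lemma injective_sum_diff : Function.Injective fun p : ℤ × ℤ => (p.1 + p.2, p.1 - p.2) := by
  rintro ⟨a, b⟩ ⟨c, d⟩ h
  simp only [Prod.mk.injEq] at h ⊢
  omega

lemma eTerm_sum_mul_diff (s d : ℤ) (τ z : ℂ) :
    eTerm (s + d) τ z * eTerm (s - d) τ z = eTerm s (2 * τ) (2 * z) * eTerm d (2 * τ) 0 := by
  simp only [eTerm, ← Complex.exp_add]
  congr 1
  push_cast
  ring

/-- The primitive Dirichlet character modulo `4`, with complex values. -/
def chi (n : ℤ) : ℂ := ((ZMod.χ₄ (n : ZMod 4) : ℤ) : ℂ)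

/-- The indicator function of the odd integers. -/
def oddI (n : ℤ) : ℂ := if n % 2 = 0 then 0 else 1

/-- The indicator function of the even integers. -/
def evenI (n : ℤ) : ℂ := if n % 2 = 0 then 1 else 0

lemma chi_eq (n : ℤ) : chi n = if n % 2 = 0 then 0 else if n % 4 = 1 then 1 else -1 := by
  rw [chi, ZMod.χ₄_int_eq_if_mod_four]
  split_ifs <;> simp

lemma chi_le (n : ℤ) : ‖chi n‖ ≤ 1 := by
  rw [chi_eq]
  split_ifs <;> simp

lemma oddI_le (n : ℤ) : ‖oddI n‖ ≤ 1 := by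
  rw [oddI]
  split_ifs <;> simp

lemma evenI_le (n : ℤ) : ‖evenI n‖ ≤ 1 := by
  rw [evenI]
  split_ifs <;> simp

lemma chi_mul_chi (s d : ℤ) :
    chi (s + d) * chi (s - d) = oddI s * evenI d - evenI s * oddI d := by
  have hs : s % 4 = 0 ∨ s % 4 = 1 ∨ s % 4 = 2 ∨ s % 4 = 3 := by omega
  have hd : d % 4 = 0 ∨ d % 4 = 1 ∨ d % 4 = 2 ∨ d % 4 = 3 := by omega
  simp only [chi_eq, oddI, evenI]
  rcases hs with h | h | h | h <;> rcases hd with h' | h' | h' | h' <;>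
    simp [show (s + d) % 4 = (s % 4 + d % 4) % 4 by omega, show (s - d) % 4 = (s % 4 - d % 4) % 4 by omega,
      show (s + d) % 2 = (s % 4 + d % 4) % 2 by omega, show (s - d) % 2 = (s % 4 - d % 4) % 2 by omega,
      show s % 2 = s % 4 % 2 by omega, show d % 2 = d % 4 % 2 by omega, h, h']

/-- A double series over pairs `(u, v)` weighted by `χ₄(u) χ₄(v)` is a series over all pairs
`(s, d)` with `u = s + d`, `v = s - d`, since `χ₄(u) χ₄(v)` lives on pairs of odd integers. -/
lemma hasSum_change {f : ℤ → ℤ → ℂ} {τ z a b : ℂ}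
    (h₁ : HasSum (fun p : ℤ × ℤ =>
      chi p.1 * chi p.2 * f p.1 p.2 * (eTerm p.1 τ z * eTerm p.2 τ z)) a)
    (h₂ : HasSum (fun p : ℤ × ℤ => (oddI p.1 * evenI p.2 - evenI p.1 * oddI p.2) *
      f (p.1 + p.2) (p.1 - p.2) * (eTerm p.1 (2 * τ) (2 * z) * eTerm p.2 (2 * τ) 0)) b) :
    a = b := by
  rw [← injective_sum_diff.hasSum_iff] at h₁
  · refine h₁.unique ?_
    convert h₂ using 2 with p
    simp only [Function.comp_apply, eTerm_sum_mul_diff, chi_mul_chi]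
  · rintro ⟨u, v⟩ huv
    by_cases hu : u % 2 = 0
    · simp [chi_eq u, hu]
    by_cases hv : v % 2 = 0
    · simp [chi_eq v, hv]
    exact absurd ⟨((u + v) / 2, (u - v) / 2), by simp; omega⟩ huv

lemma chi_two_mul_add_one (n : ℤ) : chi (2 * n + 1) = (-1 : ℂ) ^ n := by
  rcases Int.even_or_odd n with h | h
  · rw [h.neg_one_zpow, chi_eq]
    obtain ⟨m, rfl⟩ := h
    simp [show (2 * (m + m) + 1) % 4 = 1 by omega]
  · rw [h.neg_one_zpow, chi_eq]
    obtain ⟨m, rfl⟩ := h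
    simp [show (2 * (2 * m + 1) + 1) % 4 ≠ 1 by omega]

lemma thetaJ_eq_thetaW (τ z : ℂ) : thetaJ τ z = thetaW chi 0 τ z := by
  have hinj : Function.Injective fun n : ℤ => 2 * n + 1 := fun a b h => by
    simp only at h
    omega
  have hsupp : (Function.support fun n : ℤ => chi n * (n : ℂ) ^ 0 * eTerm n τ z) ⊆
      Set.range fun n : ℤ => 2 * n + 1 := by
    intro n hn
    by_contra h
    refine hn ?_
    have : n % 2 = 0 := by
      by_contra h'
      exact h ⟨n / 2, by simp only; omega⟩
    simp [chi_eq, this]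
  rw [thetaW, ← hinj.tsum_eq hsupp, thetaJ, ← tsum_mul_left]
  refine tsum_congr fun n => ?_
  rw [chi_two_mul_add_one, pow_zero, mul_one]
  have : eTerm (2 * n + 1) τ z = Complex.exp (π * I * τ / 4) * Complex.exp (π * I * z) *
      (Complex.exp (π * I * τ * n * (n + 1)) * Complex.exp (2 * π * I * z * n)) := by
    simp only [eTerm, ← Complex.exp_add]
    congr 1
    push_cast
    ring
  rw [this]
  ring

lemma hasSum_of_eq {f g : ℤ × ℤ → ℂ} {a b : ℂ} (h : HasSum f a) (hf : ∀ p, g p = f p)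
    (ha : b = a) : HasSum g b := by
  rw [ha, funext hf]
  exact h

/-- The theta decomposition of `ϑ²` along the two theta functions of index one. -/
lemma thetaJ_sq {τ : ℂ} (hτ : 0 < τ.im) (z : ℂ) :
    thetaJ τ z ^ 2 = thetaW evenI 0 (2 * τ) 0 * thetaW oddI 0 (2 * τ) (2 * z) -
      thetaW oddI 0 (2 * τ) 0 * thetaW evenI 0 (2 * τ) (2 * z) := by
  have h2 : 0 < (2 * τ).im := by simpa using hτ
  rw [thetaJ_eq_thetaW]
  refine hasSum_change (f := fun _ _ => 1) (τ := τ) (z := z) ?_ ?_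
  · refine hasSum_of_eq (hasSum_thetaW_mul chi_le chi_le 0 0 hτ z z)
      (fun p => ?_) (by ring)
    ring
  · refine hasSum_of_eq ((hasSum_thetaW_mul oddI_le evenI_le 0 0 h2 (2 * z) 0).sub
      (hasSum_thetaW_mul evenI_le oddI_le 0 0 h2 (2 * z) 0))
      (fun p => ?_) (by ring)
    ring

/-- `a₁² = 2 (o₂ e₀ - o₀ e₂)`: the Wronskian of the two theta constants of index one is the
square of `∑ χ₄(n) n q^{n²/8}`. -/
lemma wronskian_zero {τ : ℂ} (hτ : 0 < τ.im) :
    thetaW chi 1 τ 0 ^ 2 = 2 * (thetaW oddI 2 (2 * τ) 0 * thetaW evenI 0 (2 * τ) 0 -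
      thetaW oddI 0 (2 * τ) 0 * thetaW evenI 2 (2 * τ) 0) := by
  have h2 : 0 < (2 * τ).im := by simpa using hτ
  refine hasSum_change (f := fun u v => u * v) (τ := τ) (z := 0) ?_ ?_
  · refine hasSum_of_eq (hasSum_thetaW_mul chi_le chi_le 1 1 hτ 0 0)
      (fun p => ?_) (by ring)
    ring
  · refine hasSum_of_eq ((((hasSum_thetaW_mul oddI_le evenI_le 2 0 h2 0 0).sub
      (hasSum_thetaW_mul oddI_le evenI_le 0 2 h2 0 0)).sub
      (hasSum_thetaW_mul evenI_le oddI_le 2 0 h2 0 0)).add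
      (hasSum_thetaW_mul evenI_le oddI_le 0 2 h2 0 0))
      (fun p => ?_) (by ring)
    push_cast [mul_zero]
    ring

/-- `a₁ a₃ = 2 (o₄ e₀ - o₀ e₄)`, the derivative of `wronskian_zero`. -/
lemma wronskian_one {τ : ℂ} (hτ : 0 < τ.im) :
    2 * (thetaW chi 1 τ 0 * thetaW chi 3 τ 0) =
      4 * (thetaW oddI 4 (2 * τ) 0 * thetaW evenI 0 (2 * τ) 0 -
      thetaW oddI 0 (2 * τ) 0 * thetaW evenI 4 (2 * τ) 0) := by
  have h2 : 0 < (2 * τ).im := by simpa using hτ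
  refine hasSum_change (f := fun u v => u * v * (u ^ 2 + v ^ 2)) (τ := τ) (z := 0) ?_ ?_
  · refine hasSum_of_eq ((hasSum_thetaW_mul chi_le chi_le 1 3 hτ 0 0).add
      (hasSum_thetaW_mul chi_le chi_le 3 1 hτ 0 0))
      (fun p => ?_) (by ring)
    ring
  · refine hasSum_of_eq (((((hasSum_thetaW_mul oddI_le evenI_le 4 0 h2 0 0).sub
      (hasSum_thetaW_mul oddI_le evenI_le 0 4 h2 0 0)).sub
      (hasSum_thetaW_mul evenI_le oddI_le 4 0 h2 0 0)).add
      (hasSum_thetaW_mul evenI_le oddI_le 0 4 h2 0 0)).mul_left 2)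
      (fun p => ?_) (by ring)
    push_cast [mul_zero]
    ring

/-- `a₁ a₅ - a₃² = 16 (o₄ e₂ - o₂ e₄)`: with `u = s + d`, `v = s - d` this is the identity
`u v (u² - v²)² = 16 s² d² (s² - d²)` summed over the lattice. -/
lemma wronskian_two {τ : ℂ} (hτ : 0 < τ.im) :
    2 * (thetaW chi 1 τ 0 * thetaW chi 5 τ 0 - thetaW chi 3 τ 0 ^ 2) =
      32 * (thetaW oddI 4 (2 * τ) 0 * thetaW evenI 2 (2 * τ) 0 -
      thetaW oddI 2 (2 * τ) 0 * thetaW evenI 4 (2 * τ) 0) := by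
  have h2 : 0 < (2 * τ).im := by simpa using hτ
  refine hasSum_change (f := fun u v => u * v * (u ^ 2 - v ^ 2) ^ 2) (τ := τ) (z := 0) ?_ ?_
  · refine hasSum_of_eq (((hasSum_thetaW_mul chi_le chi_le 1 5 hτ 0 0).add
      (hasSum_thetaW_mul chi_le chi_le 5 1 hτ 0 0)).sub
      ((hasSum_thetaW_mul chi_le chi_le 3 3 hτ 0 0).mul_left 2))
      (fun p => ?_) (by ring)
    ring
  · refine hasSum_of_eq (((((hasSum_thetaW_mul oddI_le evenI_le 4 2 h2 0 0).sub
      (hasSum_thetaW_mul oddI_le evenI_le 2 4 h2 0 0)).sub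
      (hasSum_thetaW_mul evenI_le oddI_le 4 2 h2 0 0)).add
      (hasSum_thetaW_mul evenI_le oddI_le 2 4 h2 0 0)).mul_left 16)
      (fun p => ?_) (by ring)
    push_cast [mul_zero]
    ring

/-! ### Modularity of `a₁⁸` -/

lemma jacobiTheta₂_half (τ : ℂ) : jacobiTheta₂ ((τ + 1) / 2) τ = 0 := by
  have h := jacobiTheta₂_add_left' (-((τ + 1) / 2) + 1) τ
  rw [jacobiTheta₂_add_left, jacobiTheta₂_neg_left,
    show -((τ + 1) / 2) + 1 + τ = (τ + 1) / 2 by ring,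
    show -π * I * (τ + 2 * (-((τ + 1) / 2) + 1)) = -(π * I) by ring, Complex.exp_neg,
    Complex.exp_pi_mul_I] at h
  linear_combination h / 2

/-- Up to an elementary factor, `∑ χ₄(n) n q^{n²/8}` is the `z`-derivative of the Jacobi theta
function at its zero `(τ + 1) / 2`. -/
lemma thetaW_chi_one_eq {τ : ℂ} (hτ : 0 < τ.im) : thetaW chi 1 τ 0 =
    Complex.exp (π * I * τ / 4) / (π * I) * jacobiTheta₂' ((τ + 1) / 2) τ := by
  have hinj : Function.Injective fun n : ℤ => 2 * n + 1 := fun a b h => by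
    simp only at h
    omega
  have hsupp : (Function.support fun n : ℤ => chi n * (n : ℂ) ^ 1 * eTerm n τ 0) ⊆
      Set.range fun n : ℤ => 2 * n + 1 := by
    intro n hn
    by_contra h
    refine hn ?_
    have : n % 2 = 0 := by
      by_contra h'
      exact h ⟨n / 2, by simp only; omega⟩
    simp [chi_eq, this]
  have hsum := (((hasSum_jacobiTheta₂'_term ((τ + 1) / 2) hτ).mul_left (1 / (π * I))).add
    (hasSum_jacobiTheta₂_term ((τ + 1) / 2) hτ)).mul_left (Complex.exp (π * I * τ / 4))
  rw [jacobiTheta₂_half] at hsum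
  have hpi : (π : ℂ) * I ≠ 0 := mul_ne_zero (by exact_mod_cast pi_ne_zero) I_ne_zero
  rw [thetaW, ← hinj.tsum_eq hsupp]
  refine Eq.trans (tsum_congr fun n => ?_) (hsum.tsum_eq.trans (by ring))
  have h1 : Complex.exp (π * I * τ / 4) * jacobiTheta₂_term n ((τ + 1) / 2) τ =
      chi (2 * n + 1) * eTerm (2 * n + 1) τ 0 := by
    rw [chi_two_mul_add_one, ← Complex.exp_pi_mul_I, ← Complex.exp_int_mul, eTerm,
      jacobiTheta₂_term, ← Complex.exp_add, ← Complex.exp_add]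
    congr 1
    push_cast
    ring
  have h2 : 1 / (π * I) * jacobiTheta₂'_term n ((τ + 1) / 2) τ =
      2 * n * jacobiTheta₂_term n ((τ + 1) / 2) τ := by
    rw [jacobiTheta₂'_term]
    field_simp
  rw [h2]
  push_cast
  linear_combination (-(2 * n + 1 : ℂ)) * h1

lemma neg_one_div_im_pos {τ : ℂ} (hτ : 0 < τ.im) : 0 < (-1 / τ).im := by
  rw [neg_div, one_div, ← inv_neg, Complex.inv_im]
  have : 0 < Complex.normSq (-τ) := Complex.normSq_pos.mpr fun h => by
    simp [neg_eq_zero.mp h] at hτ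
  simp only [Complex.neg_im, neg_neg]
  positivity

lemma thetaW_chi_one_S {τ : ℂ} (hτ : 0 < τ.im) :
    thetaW chi 1 (-1 / τ) 0 ^ 8 = τ ^ 12 * thetaW chi 1 τ 0 ^ 8 := by
  have h0 : τ ≠ 0 := fun h => by simp [h] at hτ
  have hτ' := neg_one_div_im_pos hτ
  have hpi : (π : ℂ) * I ≠ 0 := mul_ne_zero (by exact_mod_cast pi_ne_zero) I_ne_zero
  have h1 := jacobiTheta₂'_functional_equation ((τ + 1) / 2) τ
  rw [show (τ + 1) / 2 / τ = -((-1 / τ + 1) / 2) + 1 by field_simp; ring,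
    jacobiTheta₂'_add_left, jacobiTheta₂_add_left, jacobiTheta₂'_neg_left, jacobiTheta₂_neg_left,
    jacobiTheta₂_half, mul_zero, sub_zero] at h1
  have hI : -I * τ ≠ 0 := mul_ne_zero (neg_ne_zero.mpr I_ne_zero) h0
  have hs : ((-I * τ) ^ (1 / 2 : ℂ)) ^ 8 = τ ^ 4 := by
    rw [← Complex.cpow_nat_mul, show ((8 : ℕ) : ℂ) * (1 / 2) = (4 : ℕ) by norm_num,
      Complex.cpow_natCast, mul_pow, neg_pow, I_pow_four]
    norm_num
  have he : Complex.exp (π * I * τ / 4) * Complex.exp (-π * I * ((τ + 1) / 2) ^ 2 / τ) =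
      -I * Complex.exp (π * I * (-1 / τ) / 4) := by
    rw [← Complex.exp_add, show π * I * τ / 4 + -π * I * ((τ + 1) / 2) ^ 2 / τ =
      -(π / 2 * I) + π * I * (-1 / τ) / 4 by field_simp; ring, Complex.exp_add, Complex.exp_neg,
      Complex.exp_pi_div_two_mul_I, Complex.inv_I]
  have hs0 : (-I * τ) ^ (1 / 2 : ℂ) ≠ 0 := fun h => h0 (by
    rw [h] at hs
    simpa using hs.symm)
  have key : thetaW chi 1 τ 0 * ((-I * τ) ^ (1 / 2 : ℂ) * τ) = I * thetaW chi 1 (-1 / τ) 0 := by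
    rw [thetaW_chi_one_eq hτ, thetaW_chi_one_eq hτ', h1]
    generalize jacobiTheta₂' ((-1 / τ + 1) / 2) (-1 / τ) = J
    generalize (-I * τ) ^ (1 / 2 : ℂ) = s at hs0 ⊢
    generalize Complex.exp (π * I * τ / 4) = E₁ at he ⊢
    generalize Complex.exp (-π * I * ((τ + 1) / 2) ^ 2 / τ) = E₂ at he ⊢
    generalize Complex.exp (π * I * (-1 / τ) / 4) = E₃ at he ⊢
    field_simp
    linear_combination (-J) * he
  have := congrArg (· ^ 8) key
  simp only [mul_pow, hs, show I ^ 8 = 1 by rw [show 8 = 4 * 2 from rfl, pow_mul, I_pow_four, one_pow]] at this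
  linear_combination -this

lemma thetaW_chi_one_T (τ : ℂ) : thetaW chi 1 (τ + 1) 0 ^ 8 = thetaW chi 1 τ 0 ^ 8 := by
  have key : thetaW chi 1 (τ + 1) 0 = Complex.exp (π * I / 4) * thetaW chi 1 τ 0 := by
    rw [thetaW, thetaW, ← tsum_mul_left]
    refine tsum_congr fun n => ?_
    rcases Int.even_or_odd n with h | h
    · simp [chi_eq, Int.even_iff.mp h]
    obtain ⟨m, rfl⟩ := h
    obtain ⟨r, hr⟩ := Int.even_mul_succ_self m
    have hr' : (m : ℂ) * (m + 1) = r + r := by exact_mod_cast hr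
    have : eTerm (2 * m + 1) (τ + 1) 0 = Complex.exp (π * I / 4) * eTerm (2 * m + 1) τ 0 := by
      rw [eTerm, eTerm, ← Complex.exp_add, Complex.exp_eq_exp_iff_exists_int]
      refine ⟨r, ?_⟩
      push_cast
      linear_combination π * I * hr'
    rw [this]
    ring
  rw [key, mul_pow, ← Complex.exp_nat_mul, show ((8 : ℕ) : ℂ) * (π * I / 4) = 2 * π * I by
    push_cast; ring, Complex.exp_two_pi_mul_I, one_mul]

section

open UpperHalfPlane hiding I
open Filter Topology MatrixGroups
open scoped ModularForm

/-- The leading term of `a₁` at the cusp is `2 q^{1/8}`, from `n = 1` and `n = -1`. -/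
lemma tendsto_thetaW_chi_one : Tendsto (fun τ : ℍ =>
    Complex.exp (-(π * I * τ / 4)) * thetaW chi 1 τ 0) atImInfty (𝓝 2) := by
  have hterm : ∀ (τ : ℍ) (n : ℤ), Complex.exp (-(π * I * τ / 4)) * (chi n * n ^ 1 * eTerm n τ 0) =
      chi n * n * Complex.exp (π * I * (n ^ 2 - 1) / 4 * τ) := fun τ n => by
    rw [eTerm, pow_one, mul_left_comm, ← Complex.exp_add]
    congr 2
    ring
  have hnorm : ∀ (τ : ℍ) (n : ℤ), ‖Complex.exp (π * I * (n ^ 2 - 1) / 4 * τ)‖ =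
      Real.exp (-(π * ((n : ℝ) ^ 2 - 1) / 4 * τ.im)) := fun τ n => by
    rw [Complex.norm_exp]
    congr 1
    have : (π * I * ((n : ℂ) ^ 2 - 1) / 4 * τ) =
        ((π * ((n : ℝ) ^ 2 - 1) / 4 : ℝ) : ℂ) * (I * τ) := by
      push_cast
      ring
    rw [this, Complex.re_ofReal_mul]
    simp
  have hodd : ∀ n : ℤ, chi n ≠ 0 → (1 : ℝ) ≤ (n : ℝ) ^ 2 := fun n hn => by
    have : n ≠ 0 := fun h => hn (by simp [h, chi_eq])
    have h2 : 0 < n ^ 2 := by positivity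
    exact_mod_cast h2
  have hlim : (∑' n : ℤ, (if n ^ 2 = 1 then chi n * n else 0 : ℂ)) = 2 := by
    rw [tsum_eq_sum (s := {1, -1})]
    · norm_num [chi_eq]
    · intro n hn
      rw [if_neg]
      intro h
      rcases sq_eq_one_iff.mp h with h | h <;> simp [h] at hn
  rw [← hlim]
  simp only [thetaW, ← tsum_mul_left, hterm]
  refine tendsto_tsum_of_dominated_convergence
    ((summable_pow_mul_jacobiTheta₂_term_bound 0 (T := 1 / 4) (by norm_num) 1).mul_left
      (Real.exp (π / 4))) (fun n => ?_) ?_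
  · by_cases hc : chi n = 0
    · simp [hc]
    split_ifs with h1
    · have h1' : (n : ℂ) ^ 2 = 1 := by exact_mod_cast h1
      simp [h1']
    · rw [tendsto_zero_iff_norm_tendsto_zero]
      simp only [norm_mul, hnorm]
      have h2 : (1 : ℝ) < (n : ℝ) ^ 2 := lt_of_le_of_ne (hodd n hc) fun h => h1 (by exact_mod_cast h.symm)
      have h3 : 0 < π * ((n : ℝ) ^ 2 - 1) / 4 := by
        have := pi_pos
        have : 0 < (n : ℝ) ^ 2 - 1 := by linarith
        positivity
      have h4 : Tendsto (fun τ : ℍ => Real.exp (-(π * ((n : ℝ) ^ 2 - 1) / 4 * τ.im))) atImInfty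
          (𝓝 0) :=
        Real.tendsto_exp_neg_atTop_nhds_zero.comp (tendsto_comap.const_mul_atTop h3)
      simpa using h4.const_mul (‖chi n‖ * ‖(n : ℂ)‖)
  · have hev : ∀ᶠ τ : ℍ in atImInfty, 1 ≤ τ.im := tendsto_comap.eventually_ge_atTop 1
    filter_upwards [hev] with τ hτ n
    by_cases hc : chi n = 0
    · simp only [hc, zero_mul, norm_zero]
      positivity
    rw [norm_mul, norm_mul, hnorm, Complex.norm_intCast]
    have h2 := hodd n hc
    have h3 : Real.exp (-(π * ((n : ℝ) ^ 2 - 1) / 4 * τ.im)) ≤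
        Real.exp (π / 4) * Real.exp (-π * (1 / 4 * n ^ 2 - 2 * 0 * |n|)) := by
      rw [← Real.exp_add]
      refine Real.exp_le_exp.mpr ?_
      have : 0 ≤ π * ((n : ℝ) ^ 2 - 1) * (τ.im - 1) :=
        mul_nonneg (mul_nonneg pi_pos.le (by linarith)) (by linarith)
      push_cast
      linarith
    calc ‖chi n‖ * |(n : ℝ)| * Real.exp (-(π * ((n : ℝ) ^ 2 - 1) / 4 * τ.im))
        ≤ 1 * |(n : ℝ)| * (Real.exp (π / 4) * Real.exp (-π * (1 / 4 * n ^ 2 - 2 * 0 * |n|))) := by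
          gcongr
          exact chi_le n
      _ = _ := by
          push_cast
          ring

/-- The eighth power of `∑ χ₄(n) n q^{n²/8}`, a function on the upper half-plane. -/
def thetaEight (τ : ℍ) : ℂ := thetaW chi 1 τ 0 ^ 8

lemma thetaEight_S : (thetaEight ∣[(12 : ℤ)] ModularGroup.S) = thetaEight := by
  ext z
  have hS : ((ModularGroup.S • z : ℍ) : ℂ) = -1 / z := by
    rw [UpperHalfPlane.modular_S_smul]
    simp [neg_div, inv_neg]
  have h := thetaW_chi_one_S (τ := (z : ℂ)) z.2
  have hz : (z : ℂ) ≠ 0 := z.ne_zero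
  rw [ModularForm.SL_slash_apply, ModularGroup.denom_S, zpow_neg, zpow_ofNat, thetaEight,
    thetaEight, hS, h]
  field_simp

lemma thetaEight_T : (thetaEight ∣[(12 : ℤ)] ModularGroup.T) = thetaEight := by
  ext z
  have hd : denom ModularGroup.T z = 1 := by
    rw [ModularGroup.denom_apply]
    simp [ModularGroup.T]
  rw [ModularForm.SL_slash_apply, modular_T_smul, hd, one_zpow, mul_one]
  have h := thetaW_chi_one_T z
  rw [add_comm] at h
  simpa [thetaEight] using h

lemma thetaEight_zero : IsZeroAtImInfty thetaEight := by
  have h := (tendsto_thetaW_chi_one.pow 8).mul (UpperHalfPlane.qParam_tendsto_atImInfty zero_lt_one)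
  rw [mul_zero] at h
  refine h.congr fun τ => ?_
  have : Complex.exp (-(π * I * τ / 4)) ^ 8 * Function.Periodic.qParam 1 (τ : ℂ) = 1 := by
    rw [Function.Periodic.qParam, ← Complex.exp_nat_mul, ← Complex.exp_add,
      ← Complex.exp_zero]
    congr 1
    push_cast
    ring
  rw [mul_pow, thetaEight]
  linear_combination thetaW chi 1 τ 0 ^ 8 * this

/-- `∑ χ₄(n) n q^{n²/8}`, raised to the eighth power, as a cusp form of weight `12`. -/
def thetaCusp : CuspForm 𝒮ℒ 12 where
  toFun := thetaEight
  slash_action_eq' A hA := by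
    obtain ⟨A, rfl⟩ := hA
    exact SlashInvariantForm.slash_action_generators_SL2Z thetaEight_S thetaEight_T A
  holo' := by
    rw [UpperHalfPlane.mdifferentiable_iff]
    refine .congr (fun z hz => ((hasDerivAt_thetaW_tau chi_le 1 hz 0).differentiableAt.pow
      8).differentiableWithinAt) fun z hz => ?_
    simp [thetaEight, ofComplex_apply_of_im_pos hz]
  zero_at_cusps' hc := by
    rw [Subgroup.IsArithmetic.isCusp_iff_isCusp_SL2Z] at hc
    rw [OnePoint.isZeroAt_iff_forall_SL2Z hc]
    intro γ _
    rw [SlashInvariantForm.slash_action_generators_SL2Z thetaEight_S thetaEight_T]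
    exact thetaEight_zero

/-- Since the space of cusp forms of weight `12` is spanned by `Δ = η²⁴`, the eighth power of
`∑ χ₄(n) n q^{n²/8}` is a nonzero multiple of `η²⁴`. -/
lemma exists_thetaW_chi_one_pow_eq : ∃ c : ℂ, c ≠ 0 ∧
    ∀ τ : ℂ, 0 < τ.im → thetaW chi 1 τ 0 ^ 8 = c * ModularForm.eta τ ^ 24 := by
  obtain ⟨c, hc⟩ := CuspForm.exists_smul_discriminant_of_weight_eq_twelve thetaCusp
  have h : ∀ τ : ℂ, 0 < τ.im → thetaW chi 1 τ 0 ^ 8 = c * ModularForm.eta τ ^ 24 := fun τ hτ => by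
    have := congrArg (fun f : CuspForm 𝒮ℒ 12 => f ⟨τ, hτ⟩) hc
    exact this.symm
  refine ⟨c, fun h0 => ?_, h⟩
  have h2 : Tendsto (fun _ : ℍ => (0 : ℂ)) atImInfty (𝓝 2) :=
    tendsto_thetaW_chi_one.congr fun τ => by
      have := h τ τ.2
      rw [h0, zero_mul] at this
      rw [eq_zero_of_pow_eq_zero this, mul_zero]
  exact two_ne_zero (tendsto_nhds_unique h2 tendsto_const_nhds)

lemma thetaW_chi_one_ne_zero {τ : ℂ} (hτ : 0 < τ.im) : thetaW chi 1 τ 0 ≠ 0 := by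
  obtain ⟨c, hc, h⟩ := exists_thetaW_chi_one_pow_eq
  intro h0
  have := h τ hτ
  rw [h0] at this
  exact mul_ne_zero hc (pow_ne_zero 24 (ModularForm.eta_ne_zero hτ)) (by rw [← this]; norm_num)

/-- `a₃ = E₂ a₁`, the logarithmic derivative of `a₁⁸ = c η²⁴`. -/
lemma thetaW_chi_three (τ : ℍ) :
    thetaW chi 3 τ 0 = EisensteinSeries.E2 τ * thetaW chi 1 τ 0 := by
  obtain ⟨c, hc, h⟩ := exists_thetaW_chi_one_pow_eq
  have hη := ModularForm.eta_ne_zero τ.2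
  have h1 := (hasDerivAt_thetaW_tau chi_le 1 τ.2 0).pow 8
  have h2 := ((ModularForm.differentiableAt_eta_of_mem_upperHalfPlaneSet τ.2).hasDerivAt.pow
    24).const_mul c
  have hev : (fun t => thetaW chi 1 t 0 ^ 8) =ᶠ[𝓝 (τ : ℂ)] fun t => c * ModularForm.eta t ^ 24 := by
    filter_upwards [(isOpen_upperHalfPlaneSet).mem_nhds τ.2] with t ht using h t ht
  have h3 := h1.unique (h2.congr_of_eventuallyEq hev)
  have h4 := ModularForm.logDeriv_eta_eq_E2 τ
  rw [logDeriv_apply, div_eq_iff hη] at h4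
  rw [h4] at h3
  have h5 := h τ τ.2
  have ha := thetaW_chi_one_ne_zero τ.2
  have hpi : (π : ℂ) * I ≠ 0 := mul_ne_zero (by exact_mod_cast pi_ne_zero) I_ne_zero
  refine mul_left_cancel₀ (mul_ne_zero hpi (pow_ne_zero 7 ha)) ?_
  norm_num at h3
  linear_combination h3 / 2 - (π * I * EisensteinSeries.E2 τ) * h5

/-! ### Eisenstein series and the Ramanujan identity -/

/-- The series `∑_{n ≥ 0} c(n) q^{n+1}`. -/
def qSer (c : ℕ → ℂ) (τ : ℂ) : ℂ := ∑' n : ℕ, c n * Complex.exp (2 * π * I * τ * (n + 1))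

lemma norm_qSer_exp (τ : ℂ) (n : ℕ) :
    ‖Complex.exp (2 * π * I * τ * (n + 1))‖ = Real.exp (-(2 * π * τ.im)) ^ (n + 1) := by
  rw [Complex.norm_exp, ← Real.exp_nat_mul]
  congr 1
  have : 2 * π * I * τ * (n + 1) = ((2 * π * (n + 1) : ℝ) : ℂ) * (I * τ) := by
    push_cast
    ring
  rw [this, Complex.re_ofReal_mul]
  simp
  ring

lemma summable_qSer_bound (k : ℕ) {T : ℝ} (hT : 0 < T) :
    Summable fun n : ℕ => ((n : ℝ) + 1) ^ k * Real.exp (-(2 * π * T)) ^ (n + 1) := by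
  have h : Summable fun n : ℕ => (n : ℝ) ^ k * Real.exp (-(2 * π * T)) ^ n := by
    refine summable_pow_mul_geometric_of_norm_lt_one k ?_
    rw [Real.norm_of_nonneg (Real.exp_pos _).le, Real.exp_lt_one_iff]
    have := pi_pos
    have : 0 < 2 * π * T := by positivity
    linarith
  simpa using (summable_nat_add_iff 1).mpr h

lemma norm_qSer_term_le {c : ℕ → ℂ} {k : ℕ} (hc : ∀ n, ‖c n‖ ≤ ((n : ℝ) + 1) ^ k) {T : ℝ} {τ : ℂ}
    (hτ : T ≤ τ.im) (n : ℕ) : ‖c n * Complex.exp (2 * π * I * τ * (n + 1))‖ ≤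
      ((n : ℝ) + 1) ^ k * Real.exp (-(2 * π * T)) ^ (n + 1) := by
  rw [norm_mul, norm_qSer_exp]
  have := pi_pos
  gcongr
  exact hc n

lemma hasDerivAt_qSer {c : ℕ → ℂ} {k : ℕ} (hc : ∀ n, ‖c n‖ ≤ ((n : ℝ) + 1) ^ k) {τ : ℂ}
    (hτ : 0 < τ.im) :
    HasDerivAt (qSer c) (2 * π * I * qSer (fun n => (n + 1) * c n) τ) τ := by
  have hc' : ∀ n : ℕ, ‖((n : ℂ) + 1) * c n‖ ≤ ((n : ℝ) + 1) ^ (k + 1) := fun n => by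
    rw [norm_mul, pow_succ', show (n : ℂ) + 1 = ((n + 1 : ℕ) : ℂ) by push_cast; rfl,
      Complex.norm_natCast]
    push_cast
    gcongr
    exact hc n
  have key := hasDerivAt_tsum_of_isPreconnected (𝕜 := ℂ)
    (g := fun (n : ℕ) t => c n * Complex.exp (2 * π * I * t * (n + 1)))
    (g' := fun (n : ℕ) t => 2 * π * I * (((n + 1) * c n) * Complex.exp (2 * π * I * t * (n + 1))))
    (t := {t : ℂ | τ.im / 2 < t.im}) (y₀ := τ) (y := τ)
    ((summable_qSer_bound (k + 1) (T := τ.im / 2) (by positivity)).mul_left (2 * π))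
    (continuous_im.isOpen_preimage _ isOpen_Ioi)
    ((convex_halfSpace_im_gt _).isPreconnected)
    (fun n t _ => by
      have : HasDerivAt (fun t : ℂ => 2 * π * I * t * (n + 1)) (2 * π * I * (n + 1)) t := by
        simpa using ((hasDerivAt_id t).const_mul (2 * π * I : ℂ)).mul_const ((n : ℂ) + 1)
      convert! this.cexp.const_mul (c n) using 1
      ring)
    (fun n t ht => by
      rw [norm_mul]
      refine mul_le_mul (by simp [abs_of_pos pi_pos]) ?_ (norm_nonneg _) two_pi_pos.le
      exact norm_qSer_term_le hc' (le_of_lt ht) n)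
    (by simp; positivity)
    ((summable_qSer_bound k hτ).of_norm_bounded fun n => norm_qSer_term_le hc le_rfl n)
    (by simp; positivity)
  rw [tsum_mul_left] at key
  exact key

lemma tendsto_qSer {c : ℕ → ℂ} {k : ℕ} (hc : ∀ n, ‖c n‖ ≤ ((n : ℝ) + 1) ^ k) :
    Tendsto (fun τ : ℍ => qSer c τ) atImInfty (𝓝 0) := by
  have h0 : (0 : ℂ) = ∑' _ : ℕ, (0 : ℂ) := by simp
  rw [h0]
  refine tendsto_tsum_of_dominated_convergence (summable_qSer_bound k one_pos) (fun n => ?_) ?_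
  · rw [tendsto_zero_iff_norm_tendsto_zero]
    simp only [norm_mul, norm_qSer_exp]
    have h1 : Tendsto (fun τ : ℍ => Real.exp (-(2 * π * τ.im))) atImInfty (𝓝 0) :=
      Real.tendsto_exp_neg_atTop_nhds_zero.comp (tendsto_comap.const_mul_atTop two_pi_pos)
    simpa using (h1.pow (n + 1)).const_mul ‖c n‖
  · have hev : ∀ᶠ τ : ℍ in atImInfty, 1 ≤ τ.im := tendsto_comap.eventually_ge_atTop 1
    filter_upwards [hev] with τ hτ n
    exact norm_qSer_term_le hc hτ n

lemma qSer_add_one (c : ℕ → ℂ) (τ : ℂ) : qSer c (τ + 1) = qSer c τ := by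
  refine tsum_congr fun n => ?_
  congr 1
  rw [Complex.exp_eq_exp_iff_exists_int]
  exact ⟨n + 1, by push_cast; ring⟩

lemma sigmaD_le (k n : ℕ) : ‖(sigmaD k (n + 1) : ℂ)‖ ≤ ((n : ℝ) + 1) ^ (k + 1) := by
  rw [Complex.norm_natCast]
  have := ArithmeticFunction.sigma_le_pow_succ k (n + 1)
  rw [ArithmeticFunction.sigma_apply] at this
  exact_mod_cast this

lemma Eis2_eq_qSer (τ : ℂ) : Eis2 τ = 1 - 24 * qSer (fun n => sigmaD 1 (n + 1)) τ := rfl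

lemma Eis4_eq_qSer (τ : ℂ) : Eis4 τ = 1 + 240 * qSer (fun n => sigmaD 3 (n + 1)) τ := rfl

lemma qSer_sigmaD_eq (k : ℕ) (z : ℂ) : qSer (fun n => sigmaD k (n + 1)) z =
    ∑' n : ℕ+, (ArithmeticFunction.sigma k (n : ℕ) : ℂ) * Complex.exp (2 * π * I * z) ^ (n : ℕ) := by
  rw [tsum_pnat_eq_tsum_succ
    (f := fun n => (ArithmeticFunction.sigma k n : ℂ) * Complex.exp (2 * π * I * z) ^ n)]
  refine tsum_congr fun n => ?_
  rw [ArithmeticFunction.sigma_apply, ← Complex.exp_nat_mul]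
  change ((∑ d ∈ (n + 1).divisors, d ^ k : ℕ) : ℂ) * _ = _
  congr 2
  push_cast
  ring

lemma Eis2_eq_s9 (z : ℍ) : Eis2 z = EisensteinSeries.E2 z := by
  rw [EisensteinSeries.E2_eq_tsum_cexp, Eis2_eq_qSer, qSer_sigmaD_eq]

lemma Eis4_eq (z : ℍ) : Eis4 z = ModularForm.E₄ z := by
  have hb : bernoulli 4 = -1 / 30 := by
    rw [bernoulli_eq_bernoulli'_of_ne_one (by norm_num), bernoulli'_four]
  rw [ModularForm.E₄, EisensteinSeries.q_expansion_bernoulli (by norm_num) ⟨2, rfl⟩,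
    Eis4_eq_qSer, qSer_sigmaD_eq, hb]
  norm_num [zpow_natCast]

lemma etaD_eq (τ : ℂ) : etaD τ = ModularForm.eta τ := by
  rw [etaD, ModularForm.eta, Function.Periodic.qParam]
  congr 1
  · congr 1
    push_cast
    ring
  · refine tprod_congr fun n => ?_
    rw [ModularForm.eta_q_eq_cexp]
    congr 2
    ring

lemma hasDerivAt_Eis2_s9 {τ : ℂ} (hτ : 0 < τ.im) : HasDerivAt Eis2
    (-(24 * (2 * π * I * qSer (fun n => (n + 1) * sigmaD 1 (n + 1)) τ))) τ :=
  ((hasDerivAt_qSer (sigmaD_le 1) hτ).const_mul 24).const_sub 1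

/-- The combination `E₂² - 12 q dE₂/dq`, shown in `ramF_eq` to be `E₄`. -/
def ramF (τ : ℂ) : ℂ := Eis2 τ ^ 2 - 12 / (2 * π * I) * deriv Eis2 τ

lemma ramF_eq_qSer {τ : ℂ} (hτ : 0 < τ.im) :
    ramF τ = Eis2 τ ^ 2 + 288 * qSer (fun n => (n + 1) * sigmaD 1 (n + 1)) τ := by
  rw [ramF, (hasDerivAt_Eis2_s9 hτ).deriv]
  have hpi : (π : ℂ) ≠ 0 := by exact_mod_cast pi_ne_zero
  have := I_ne_zero
  field_simp
  ring

lemma succ_mul_sigmaD_le (n : ℕ) : ‖((n : ℂ) + 1) * sigmaD 1 (n + 1)‖ ≤ ((n : ℝ) + 1) ^ 3 := by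
  rw [norm_mul, pow_succ', show (n : ℂ) + 1 = ((n + 1 : ℕ) : ℂ) by push_cast; rfl,
    Complex.norm_natCast]
  push_cast
  gcongr
  exact sigmaD_le 1 n

lemma ramF_tendsto : Tendsto (fun τ : ℍ => ramF τ) atImInfty (𝓝 1) := by
  have h := (((tendsto_qSer (sigmaD_le 1)).const_mul 24).const_sub 1 |>.pow 2).add
    ((tendsto_qSer succ_mul_sigmaD_le).const_mul 288)
  norm_num at h
  exact h.congr fun τ => (ramF_eq_qSer τ.2).symm

lemma ramF_T {τ : ℂ} (hτ : 0 < τ.im) : ramF (τ + 1) = ramF τ := by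
  rw [ramF_eq_qSer hτ, ramF_eq_qSer (by simpa using hτ), Eis2_eq_qSer, Eis2_eq_qSer, qSer_add_one,
    qSer_add_one]

lemma Eis2_S {τ : ℂ} (hτ : 0 < τ.im) :
    Eis2 (-1 / τ) = τ ^ 2 * Eis2 τ + 6 / (π * I) * τ := by
  set z : ℍ := ⟨τ, hτ⟩ with hz
  have hcz : (z : ℂ) = τ := rfl
  have hS : ((ModularGroup.S • z : ℍ) : ℂ) = -1 / z := by
    rw [UpperHalfPlane.modular_S_smul]
    simp [neg_div, inv_neg]
  have h := congrFun (EisensteinSeries.E2_slash_action ModularGroup.S) z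
  rw [ModularForm.SL_slash_apply, ModularGroup.denom_S, zpow_neg, zpow_ofNat, Pi.sub_apply,
    Pi.smul_apply, EisensteinSeries.D2_S, ← Eis2_eq_s9, ← Eis2_eq_s9, hS, riemannZeta_two, hcz,
    smul_eq_mul] at h
  have h0 : τ ≠ 0 := fun h => by simp [h] at hτ
  have hpi : (π : ℂ) ≠ 0 := by exact_mod_cast pi_ne_zero
  have hI := I_ne_zero
  rw [← div_eq_mul_inv, div_eq_iff (pow_ne_zero 2 h0)] at h
  rw [h]
  field_simp
  linear_combination (-6) * I_sq

lemma ramF_S {τ : ℂ} (hτ : 0 < τ.im) : ramF (-1 / τ) = τ ^ 4 * ramF τ := by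
  have h0 : τ ≠ 0 := fun h => by simp [h] at hτ
  have hpi : (π : ℂ) ≠ 0 := by exact_mod_cast pi_ne_zero
  have hI := I_ne_zero
  have d1 := (hasDerivAt_Eis2_s9 hτ).differentiableAt.hasDerivAt
  have d2 := (hasDerivAt_Eis2_s9 (neg_one_div_im_pos hτ)).differentiableAt.hasDerivAt
  have d3 : HasDerivAt (fun t : ℂ => -1 / t) (1 / τ ^ 2) τ := by
    simpa [div_eq_mul_inv] using (hasDerivAt_inv h0).const_mul (-1)
  have d4 := d2.comp τ d3
  have d5 := (((hasDerivAt_id τ).pow 2).mul d1).add ((hasDerivAt_id τ).const_mul (6 / (π * I)))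
  have hev : (Eis2 ∘ fun t => -1 / t) =ᶠ[𝓝 τ]
      fun t => t ^ 2 * Eis2 t + 6 / (π * I) * t := by
    filter_upwards [(isOpen_upperHalfPlaneSet).mem_nhds hτ] with t ht using Eis2_S ht
  have h := (d4.congr_of_eventuallyEq hev.symm).unique d5
  simp only [id, Pi.pow_apply] at h
  rw [ramF, ramF, Eis2_S hτ]
  generalize deriv Eis2 (-1 / τ) = P' at h ⊢
  generalize deriv Eis2 τ = P at h ⊢
  have h' : P' = τ ^ 2 * (2 * τ * Eis2 τ + τ ^ 2 * P + 6 / (π * I)) := by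
    field_simp at h ⊢
    linear_combination h
  rw [h']
  field_simp
  ring

lemma ramF_slash_S : ((fun τ : ℍ => ramF τ) ∣[(4 : ℤ)] ModularGroup.S) = fun τ : ℍ => ramF τ := by
  ext z
  have hS : ((ModularGroup.S • z : ℍ) : ℂ) = -1 / z := by
    rw [UpperHalfPlane.modular_S_smul]
    simp [neg_div, inv_neg]
  have hz : (z : ℂ) ≠ 0 := z.ne_zero
  rw [ModularForm.SL_slash_apply, ModularGroup.denom_S, zpow_neg, zpow_ofNat, hS,
    ramF_S (τ := (z : ℂ)) z.2]
  field_simp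

lemma ramF_slash_T : ((fun τ : ℍ => ramF τ) ∣[(4 : ℤ)] ModularGroup.T) = fun τ : ℍ => ramF τ := by
  ext z
  have hd : denom ModularGroup.T z = 1 := by
    rw [ModularGroup.denom_apply]
    simp [ModularGroup.T]
  rw [ModularForm.SL_slash_apply, modular_T_smul, hd, one_zpow, mul_one]
  have h := ramF_T (τ := (z : ℂ)) z.2
  rw [add_comm] at h
  simpa using h

/-- `E₂² - 12 q dE₂/dq` as a modular form of weight `4`. -/
def ramForm : ModularForm 𝒮ℒ 4 where
  toFun := fun τ => ramF τ
  slash_action_eq' A hA := by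
    obtain ⟨A, rfl⟩ := hA
    exact SlashInvariantForm.slash_action_generators_SL2Z ramF_slash_S ramF_slash_T A
  holo' := by
    rw [UpperHalfPlane.mdifferentiable_iff]
    refine .congr (fun z hz => (((hasDerivAt_Eis2_s9 hz).differentiableAt.pow 2).add
      ((hasDerivAt_qSer succ_mul_sigmaD_le hz).differentiableAt.const_mul
        288)).differentiableWithinAt) fun z hz => ?_
    simp only [Function.comp_apply, ofComplex_apply_of_im_pos hz]
    exact ramF_eq_qSer hz
  bdd_at_cusps' hc := by
    rw [Subgroup.IsArithmetic.isCusp_iff_isCusp_SL2Z] at hc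
    rw [OnePoint.isBoundedAt_iff_forall_SL2Z hc]
    intro γ _
    rw [SlashInvariantForm.slash_action_generators_SL2Z ramF_slash_S ramF_slash_T]
    exact ramF_tendsto.isBigO_one ℝ

/-- Ramanujan's identity `12 q dE₂/dq = E₂² - E₄`: both sides of `ramF = E₄` are modular of
weight `4` with constant term `1`, and the space of such forms is one-dimensional. -/
lemma ramF_eq (τ : ℍ) : ramF τ = Eis4 τ := by
  have h4 : Tendsto (fun τ : ℍ => Eis4 τ) atImInfty (𝓝 1) := by
    have h := ((tendsto_qSer (sigmaD_le 3)).const_mul 240).const_add 1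
    norm_num at h
    exact h
  have hne : ModularForm.E₄ ≠ 0 := EisensteinSeries.E_ne_zero (by norm_num) ⟨2, rfl⟩
  obtain ⟨c, hc⟩ := (finrank_eq_one_iff_of_nonzero' _ hne).mp
    (Module.rank_eq_one_iff_finrank_eq_one.mp ModularForm.levelOne_weight_four_rank_one) ramForm
  have h : ∀ τ : ℍ, c * Eis4 τ = ramF τ := fun τ => by
    rw [Eis4_eq]
    exact congrArg (fun f : ModularForm 𝒮ℒ 4 => f τ) hc
  have hc1 : c = 1 := by
    have h1 := (h4.const_mul c).congr h
    rw [mul_one] at h1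
    exact tendsto_nhds_unique h1 ramF_tendsto
  rw [← h, hc1, one_mul]

/-! ### The differential equation for the theta constants -/

lemma hasDerivAt_thetaW_two_tau {c : ℤ → ℂ} (hc : ∀ n, ‖c n‖ ≤ 1) (k : ℕ) {τ : ℂ}
    (hτ : 0 < τ.im) (z : ℂ) : HasDerivAt (fun t => thetaW c k (2 * t) z)
      (π * I / 2 * thetaW c (k + 2) (2 * τ) z) τ := by
  have h2 : 0 < (2 * τ).im := by simpa using hτ
  have h := (hasDerivAt_thetaW_tau hc k h2 z).comp τ ((hasDerivAt_id τ).const_mul 2)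
  convert! h using 1
  ring

lemma thetaW_chi_three_eq {τ : ℂ} (hτ : 0 < τ.im) :
    thetaW chi 3 τ 0 = Eis2 τ * thetaW chi 1 τ 0 := by
  have h := thetaW_chi_three ⟨τ, hτ⟩
  rwa [← Eis2_eq_s9] at h

lemma deriv_Eis2_eq {τ : ℂ} (hτ : 0 < τ.im) :
    deriv Eis2 τ = 2 * π * I / 12 * (Eis2 τ ^ 2 - Eis4 τ) := by
  have h := ramF_eq ⟨τ, hτ⟩
  change Eis2 τ ^ 2 - 12 / (2 * π * I) * deriv Eis2 τ = Eis4 τ at h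
  rw [← h]
  have hpi : (π : ℂ) ≠ 0 := by exact_mod_cast pi_ne_zero
  have hI := I_ne_zero
  field_simp
  ring

/-- The derivative of `thetaW_chi_three_eq`, with the derivative of `E₂` given by Ramanujan's
identity. -/
lemma thetaW_chi_five_eq {τ : ℂ} (hτ : 0 < τ.im) :
    thetaW chi 5 τ 0 = (2 / 3 * (Eis2 τ ^ 2 - Eis4 τ) + Eis2 τ ^ 2) * thetaW chi 1 τ 0 := by
  have d1 := hasDerivAt_thetaW_tau chi_le 3 hτ 0
  have d2 := (hasDerivAt_Eis2_s9 hτ).differentiableAt.hasDerivAt.mul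
    (hasDerivAt_thetaW_tau chi_le 1 hτ 0)
  have hev : (fun t => thetaW chi 3 t 0) =ᶠ[𝓝 τ] fun t => Eis2 t * thetaW chi 1 t 0 := by
    filter_upwards [(isOpen_upperHalfPlaneSet).mem_nhds hτ] with t ht using thetaW_chi_three_eq ht
  have h := (d1.congr_of_eventuallyEq hev.symm).unique d2
  rw [deriv_Eis2_eq hτ, show 1 + 2 = 3 from rfl, thetaW_chi_three_eq hτ] at h
  have hpi : (π : ℂ) ≠ 0 := by exact_mod_cast pi_ne_zero
  have hI := I_ne_zero
  refine mul_left_cancel₀ (mul_ne_zero hpi hI) ?_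
  linear_combination 4 * h

/-- The equation `e₄ = E₂ e₂ - (q dE₂/dq) e₀` for a theta constant `e`, deduced from the three
Wronskian identities by elimination of the second solution. -/
lemma thetaW_even_ode {τ : ℂ} (hτ : 0 < τ.im) : thetaW evenI 4 (2 * τ) 0 =
    Eis2 τ * thetaW evenI 2 (2 * τ) 0
      - (Eis2 τ ^ 2 - Eis4 τ) / 12 * thetaW evenI 0 (2 * τ) 0 := by
  have w0 := wronskian_zero hτ
  have w1 := wronskian_one hτ
  have w2 := wronskian_two hτ
  have ha := thetaW_chi_one_ne_zero hτ
  rw [thetaW_chi_three_eq hτ] at w1 w2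
  rw [thetaW_chi_five_eq hτ] at w2
  refine mul_left_cancel₀ (pow_ne_zero 2 ha) ?_
  linear_combination thetaW evenI 4 (2 * τ) 0 * w0 - thetaW evenI 2 (2 * τ) 0 / 2 * w1
    + thetaW evenI 0 (2 * τ) 0 / 16 * w2

lemma thetaW_odd_ode {τ : ℂ} (hτ : 0 < τ.im) : thetaW oddI 4 (2 * τ) 0 =
    Eis2 τ * thetaW oddI 2 (2 * τ) 0
      - (Eis2 τ ^ 2 - Eis4 τ) / 12 * thetaW oddI 0 (2 * τ) 0 := by
  have w0 := wronskian_zero hτ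
  have w1 := wronskian_one hτ
  have w2 := wronskian_two hτ
  have ha := thetaW_chi_one_ne_zero hτ
  rw [thetaW_chi_three_eq hτ] at w1 w2
  rw [thetaW_chi_five_eq hτ] at w2
  refine mul_left_cancel₀ (pow_ne_zero 2 ha) ?_
  linear_combination thetaW oddI 4 (2 * τ) 0 * w0 - thetaW oddI 2 (2 * τ) 0 / 2 * w1
    + thetaW oddI 0 (2 * τ) 0 / 16 * w2

/-! ### The heat operator on the theta decomposition -/

lemma hasDerivAt_thetaW_two_z {c : ℤ → ℂ} (hc : ∀ n, ‖c n‖ ≤ 1) {τ : ℂ} (hτ : 0 < τ.im) (k : ℕ)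
    (z : ℂ) : HasDerivAt (fun w => thetaW c k (2 * τ) (2 * w))
      (2 * π * I * thetaW c (k + 1) (2 * τ) (2 * z)) z := by
  have h2 : 0 < (2 * τ).im := by simpa using hτ
  have h := (hasDerivAt_thetaW_z hc k h2 (2 * z)).comp z ((hasDerivAt_id z).const_mul 2)
  convert! h using 1
  ring

/-- On a combination `f₁ Θ_odd + f₂ Θ_even` the index one heat operator only sees the
coefficients, since it annihilates `Θ_odd(2τ,2z)` and `Θ_even(2τ,2z)`. -/
lemma heatMod_decomp (k : ℚ) {φ : ℂ → ℂ → ℂ} {f₁ f₂ : ℂ → ℂ}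
    (hφ : ∀ t : ℂ, 0 < t.im → ∀ w, φ t w =
      f₁ t * thetaW oddI 0 (2 * t) (2 * w) + f₂ t * thetaW evenI 0 (2 * t) (2 * w))
    {τ f₁' f₂' : ℂ} (hτ : 0 < τ.im) (h₁ : HasDerivAt f₁ (2 * π * I / 12 * f₁') τ)
    (h₂ : HasDerivAt f₂ (2 * π * I / 12 * f₂') τ) (z : ℂ) :
    heatMod 1 k φ τ z =
      (f₁' - (2 * k - 1) / 2 * Eis2 τ * f₁ τ) * thetaW oddI 0 (2 * τ) (2 * z)
      + (f₂' - (2 * k - 1) / 2 * Eis2 τ * f₂ τ) * thetaW evenI 0 (2 * τ) (2 * z) := by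
  have hpi : (π : ℂ) ≠ 0 := by exact_mod_cast pi_ne_zero
  have hI := I_ne_zero
  have dt := (h₁.mul (hasDerivAt_thetaW_two_tau oddI_le 0 hτ (2 * z))).add
    (h₂.mul (hasDerivAt_thetaW_two_tau evenI_le 0 hτ (2 * z)))
  have hev : (fun t => φ t z) =ᶠ[𝓝 τ] fun t =>
      f₁ t * thetaW oddI 0 (2 * t) (2 * z) + f₂ t * thetaW evenI 0 (2 * t) (2 * z) := by
    filter_upwards [(isOpen_upperHalfPlaneSet).mem_nhds hτ] with t ht using hφ t ht z
  have et := (dt.congr_of_eventuallyEq hev).deriv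
  have dz : ∀ (j : ℕ) (w : ℂ), HasDerivAt
      (fun w => f₁ τ * thetaW oddI j (2 * τ) (2 * w) + f₂ τ * thetaW evenI j (2 * τ) (2 * w))
      (2 * π * I * (f₁ τ * thetaW oddI (j + 1) (2 * τ) (2 * w)
        + f₂ τ * thetaW evenI (j + 1) (2 * τ) (2 * w))) w := fun j w => by
    convert! ((hasDerivAt_thetaW_two_z oddI_le hτ j w).const_mul (f₁ τ)).add
      ((hasDerivAt_thetaW_two_z evenI_le hτ j w).const_mul (f₂ τ)) using 1
    ring
  have ez : deriv (deriv (φ τ)) z = 2 * π * I * (2 * π * I *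
      (f₁ τ * thetaW oddI 2 (2 * τ) (2 * z) + f₂ τ * thetaW evenI 2 (2 * τ) (2 * z))) := by
    rw [funext (hφ τ hτ), funext fun w => (dz 0 w).deriv]
    exact ((dz 1 z).const_mul _).deriv
  rw [heatMod, heatOp, et, ez, hφ τ hτ z]
  field_simp
  push_cast
  ring_nf
  rw [I_sq]
  ring

/-- The equation for `ϑ²` with an extra factor `h` satisfying `12 q dh/dq = -κ E₂ h`;
this factor lowers the weights by `κ`. For `ϑ²` itself `h = 1`, `κ = 0`; for `φ_{-2,1}`,
`h = η⁻⁶`, `κ = 3`. -/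
lemma heatMod_heatMod {h : ℂ → ℂ} {κ : ℚ} {φ : ℂ → ℂ → ℂ}
    (hh : ∀ t : ℂ, 0 < t.im → HasDerivAt h (2 * π * I / 12 * (-κ * Eis2 t * h t)) t)
    (hφ : ∀ t : ℂ, 0 < t.im → ∀ w, φ t w = h t * thetaJ t w ^ 2) {τ : ℂ} (hτ : 0 < τ.im) (z : ℂ) :
    heatMod 1 (3 - κ) (heatMod 1 (1 - κ) φ) τ z = 5 / 4 * Eis4 τ * φ τ z := by
  have dE : ∀ t : ℂ, 0 < t.im →
      HasDerivAt Eis2 (2 * π * I / 12 * (Eis2 t ^ 2 - Eis4 t)) t := fun t ht => by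
    rw [← deriv_Eis2_eq ht]
    exact (hasDerivAt_Eis2_s9 ht).differentiableAt.hasDerivAt
  have d0 : ∀ {c : ℤ → ℂ}, (∀ n, ‖c n‖ ≤ 1) → ∀ (a : ℂ) (t : ℂ), 0 < t.im → HasDerivAt
      (fun t => a * h t * thetaW c 0 (2 * t) 0)
      (2 * π * I / 12 * (a * h t * (3 * thetaW c 2 (2 * t) 0
        - κ * Eis2 t * thetaW c 0 (2 * t) 0))) t := fun hc a t ht => by
    convert! ((hh t ht).const_mul a).mul (hasDerivAt_thetaW_two_tau hc 0 ht 0) using 1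
    ring
  have d1 : ∀ {c : ℤ → ℂ}, (∀ n, ‖c n‖ ≤ 1) → ∀ (a : ℂ), HasDerivAt
      (fun t => a * h t * (3 * thetaW c 2 (2 * t) 0 - 1 / 2 * Eis2 t * thetaW c 0 (2 * t) 0))
      (2 * π * I / 12 * (a * h τ * (-κ * Eis2 τ *
        (3 * thetaW c 2 (2 * τ) 0 - 1 / 2 * Eis2 τ * thetaW c 0 (2 * τ) 0)
        + (9 * thetaW c 4 (2 * τ) 0 - 1 / 2 * (Eis2 τ ^ 2 - Eis4 τ) * thetaW c 0 (2 * τ) 0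
          - 3 / 2 * Eis2 τ * thetaW c 2 (2 * τ) 0)))) τ := fun hc a => by
    convert! ((hh τ hτ).const_mul a).mul
      (((hasDerivAt_thetaW_two_tau hc 2 hτ 0).const_mul 3).sub
        (((dE τ hτ).const_mul (1 / 2)).mul (hasDerivAt_thetaW_two_tau hc 0 hτ 0))) using 1
    simp only [Pi.sub_apply, Pi.mul_apply]
    ring
  have step1 : ∀ t : ℂ, 0 < t.im → ∀ w, heatMod 1 (1 - κ) φ t w =
      1 * h t * (3 * thetaW evenI 2 (2 * t) 0 - 1 / 2 * Eis2 t * thetaW evenI 0 (2 * t) 0)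
        * thetaW oddI 0 (2 * t) (2 * w)
      + -1 * h t * (3 * thetaW oddI 2 (2 * t) 0 - 1 / 2 * Eis2 t * thetaW oddI 0 (2 * t) 0)
        * thetaW evenI 0 (2 * t) (2 * w) := fun t ht w => by
    rw [heatMod_decomp (1 - κ) (fun t ht w => ?_) ht (d0 evenI_le 1 t ht) (d0 oddI_le (-1) t ht) w]
    · push_cast
      ring
    · rw [hφ t ht, thetaJ_sq ht]
      ring
  rw [heatMod_decomp (3 - κ) step1 hτ (d1 evenI_le 1) (d1 oddI_le (-1)) z, hφ τ hτ, thetaJ_sq hτ,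
    thetaW_even_ode hτ, thetaW_odd_ode hτ]
  push_cast
  ring

lemma hasDerivAt_etaD_pow {τ : ℂ} (hτ : 0 < τ.im) : HasDerivAt (fun t => (etaD t ^ 6)⁻¹)
    (2 * π * I / 12 * (-(3 : ℚ) * Eis2 τ * (etaD τ ^ 6)⁻¹)) τ := by
  have hne : ModularForm.eta τ ≠ 0 := ModularForm.eta_ne_zero hτ
  have hd := (ModularForm.differentiableAt_eta_of_mem_upperHalfPlaneSet hτ).hasDerivAt
  have hl := ModularForm.logDeriv_eta_eq_E2 ⟨τ, hτ⟩
  rw [← Eis2_eq_s9, logDeriv_apply] at hl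
  change deriv ModularForm.eta τ / ModularForm.eta τ = π * I / 12 * Eis2 τ at hl
  rw [div_eq_iff hne] at hl
  rw [hl] at hd
  simp only [funext etaD_eq]
  convert! (hd.pow 6).inv (pow_ne_zero 6 hne) using 1
  rw [Pi.pow_apply]
  field_simp
  push_cast
  ring

end

/-- Kaneko–Zagier type equation for `ϑ²`:
`H^{(1)}_{3}(H^{(1)}_{1}(ϑ²)) − (5/4)·E₄·ϑ² = 0`, equivalently
`H^{(1)}_{0}(H^{(1)}_{−2}(φ_{−2,1})) − (5/4)·E₄·φ_{−2,1} = 0`. -/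
theorem statement9 (τ z : ℂ) (hτ : 0 < τ.im) :
    heatMod 1 3 (heatMod 1 1 (fun t w => thetaJ t w ^ 2)) τ z
        - (5/4) * Eis4 τ * thetaJ τ z ^ 2 = 0 ∧
    heatMod 1 0 (heatMod 1 (-2) phim21) τ z - (5/4) * Eis4 τ * phim21 τ z = 0 := by
  constructor
  · have h := heatMod_heatMod (h := fun _ => 1) (κ := 0) (φ := fun t w => thetaJ t w ^ 2)
      (fun t _ => by simpa using hasDerivAt_const t (1 : ℂ)) (fun t _ w => by simp) hτ z
    norm_num at h ⊢
    rw [h, sub_self]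
  · have h := heatMod_heatMod (κ := 3) (φ := phim21)
      (fun t ht => hasDerivAt_etaD_pow ht) (fun t _ w => by rw [phim21]; ring) hτ z
    norm_num at h ⊢
    rw [h, sub_self]
end
end
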